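/- arXiv:2505.01611 — 2 statements merged into one kernel-verified Lean document; each statement's English description precedes it below -/
import Mathlib

section
/- Let w_max and w_min be, respectively, the largest and the smallest width of Ω over all directions. Then sup{ ‖u_{h₁}‖₁ / ‖u_{h₂}‖₁ : u ∈ 𝒰_Ω, u ≢ 0, h₁, h₂ unit vectors } = 2 w_max / w_min if and only if there exist a unit vector h₁ realizing the width w_max and a unit vector h₂ realizing the width w_min such that h₁ and h₂ are orthogonal. -/
open Set MeasureTheory
open scoped ENNReal

/-- Partial derivative of `u` in the `x` direction (junk value where `u` is not
differentiable). -/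
noncomputable def ux (u : ℝ × ℝ → ℝ) (z : ℝ × ℝ) : ℝ := fderiv ℝ u z (1, 0)

/-- Partial derivative of `u` in the `y` direction. -/
noncomputable def uy (u : ℝ × ℝ → ℝ) (z : ℝ × ℝ) : ℝ := fderiv ℝ u z (0, 1)

/-- Directional derivative of `u` in the direction `h`. -/
noncomputable def uh (h : ℝ × ℝ) (u : ℝ × ℝ → ℝ) (z : ℝ × ℝ) : ℝ := fderiv ℝ u z h

/-- The class `𝒰_Ω`: continuous concave functions on `Ω` vanishing on the boundary,
with uniformly bounded gradient over all interior points where it exists. -/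
def MemU (Ω : Set (ℝ × ℝ)) (u : ℝ × ℝ → ℝ) : Prop :=
  ContinuousOn u Ω ∧ ConcaveOn ℝ Ω u ∧ (∀ z ∈ frontier Ω, u z = 0) ∧
    ∃ C : ℝ, ∀ z ∈ interior Ω, ∀ g : (ℝ × ℝ) →L[ℝ] ℝ, HasFDerivAt u g z → ‖g‖ ≤ C

/-- The `L¹` norm of `f` over `Ω`. -/
noncomputable def L1N (Ω : Set (ℝ × ℝ)) (f : ℝ × ℝ → ℝ) : ℝ := ∫ z in Ω, |f z|

/-- The `L^p` norm of `f` over `Ω`, `p ∈ [1, ∞)`. -/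
noncomputable def LpN (Ω : Set (ℝ × ℝ)) (p : ℝ) (f : ℝ × ℝ → ℝ) : ℝ :=
  (∫ z in Ω, |f z| ^ p) ^ (1 / p)

/-- The `L^∞` norm (essential supremum) of `f` over `Ω`. -/
noncomputable def LinfN (Ω : Set (ℝ × ℝ)) (f : ℝ × ℝ → ℝ) : ℝ≥0∞ :=
  essSup (fun z => ENNReal.ofReal |f z|) (volume.restrict Ω)

/-- The width of `Ω` parallel to the (Euclidean unit) vector `h`: the distance between the
two lines of support of `Ω` parallel to `h`, i.e. the oscillation over `Ω` of the linear
functional given by the unit normal `(-h.2, h.1)` to `h`. -/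
noncomputable def widthPar (Ω : Set (ℝ × ℝ)) (h : ℝ × ℝ) : ℝ :=
  sSup ((fun z : ℝ × ℝ => -h.2 * z.1 + h.1 * z.2) '' Ω) -
    sInf ((fun z : ℝ × ℝ => -h.2 * z.1 + h.1 * z.2) '' Ω)

/-!
Along a line parallel to a unit vector `h`, a concave `u` vanishing on `∂Ω` has total variation
twice its maximum on that line. Integrating over these lines and applying the layer-cake formula
gives `‖u_h‖₁ = 2 ∫₀^M ω_h(s) ds`, where `M = max u` and `ω_h(s)` is the width parallel to `h` of
the superlevel set `{u ≥ s}`. As `ω_h` is nonnegative, antitone and concave on `[0, M]`, we get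
`M w(h) ≤ ‖u_h‖₁ ≤ 2 M w(h)` with `w(h) = ω_h(0)`, so every ratio is at most `2 wmax / wmin`.

A ratio close to this bound forces a superlevel set of height close to `M` to be almost as wide as
`wmax` across `h₁` while having almost no width across `h₂`. Since the diameter of `Ω` is `wmax`, a
chord realizing the first width is almost normal to `h₁`, hence `h₁` and `h₂` are almost orthogonal,
and compactness turns this into an orthogonal extremal pair. Conversely, for such a pair a diameter
of `Ω` is parallel to `h₂`; capping a tent function of the coordinate across `h₂` by a steep concave
function vanishing on `∂Ω` gives a roof whose ridge is almost that diameter, and its ratio is almost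
`2 wmax / wmin`.
-/

section OneVariable

variable {f : ℝ → ℝ} {a b c p : ℝ}

theorem setLIntegral_Ioo_add {g : ℝ → ℝ≥0∞} (hab : a ≤ b) (hbc : b ≤ c) :
    ∫⁻ x in Ioo a c, g x = (∫⁻ x in Ioo a b, g x) + ∫⁻ x in Ioo b c, g x := by
  simp only [setLIntegral_congr Ioo_ae_eq_Ioc]
  rw [← Ioc_union_Ioc_eq_Ioc hab hbc]
  exact lintegral_union measurableSet_Ioc (Ioc_disjoint_Ioc_of_le le_rfl)

theorem lintegral_enorm_rightDeriv_of_monotoneOn {f' : ℝ → ℝ} (hab : a ≤ b)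
    (hf : ContinuousOn f (Icc a b)) (hmono : MonotoneOn f (Icc a b))
    (hf' : ∀ x ∈ Ioo a b, HasDerivWithinAt f (f' x) (Ioi x) x) :
    ∫⁻ x in Ioo a b, ‖f' x‖ₑ = ENNReal.ofReal (f b - f a) := by
  have hpos : ∀ x ∈ Ioo a b, 0 ≤ f' x := fun x hx => by
    have hacc : AccPt x (Filter.principal (Ioo x b)) := by
      rw [accPt_principal_iff_nhdsWithin, sdiff_singleton_eq_self left_notMem_Ioo,
        nhdsWithin_Ioo_eq_nhdsGT hx.2]
      infer_instance
    exact ((hf' x hx).mono Ioo_subset_Ioi_self).nonneg_of_monotoneOn hacc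
      (hmono.mono (Ioo_subset_Icc_self.trans (Icc_subset_Icc_left hx.1.le)))
  have hint := intervalIntegral.integrableOn_deriv_right_of_nonneg hf hf' hpos
  have hftc := intervalIntegral.integral_eq_sub_of_hasDeriv_right_of_le hab hf hf'
    ((intervalIntegrable_iff_integrableOn_Ioc_of_le hab).2 hint)
  rw [intervalIntegral.integral_of_le hab, integral_Ioc_eq_integral_Ioo] at hftc
  rw [← hftc, ofReal_integral_eq_lintegral_ofReal (hint.mono_set Ioo_subset_Ioc_self)
    ((ae_restrict_iff' measurableSet_Ioo).2 (.of_forall hpos))]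
  exact setLIntegral_congr_fun measurableSet_Ioo fun x hx => Real.enorm_eq_ofReal (hpos x hx)

theorem monotoneOn_of_concaveOn_of_isMaxOn (hf : ConcaveOn ℝ (Icc a b) f) (hp : p ∈ Icc a b)
    (hmax : IsMaxOn f (Icc a b) p) : MonotoneOn f (Icc a p) := by
  intro x hx y hy hxy
  have hxI : x ∈ Icc a b := ⟨hx.1, hx.2.trans hp.2⟩
  simpa only [min_eq_left (isMaxOn_iff.1 hmax x hxI)] using hf.min_le_of_mem_Icc hxI hp ⟨hxy, hy.2⟩

theorem antitoneOn_of_concaveOn_of_isMaxOn (hf : ConcaveOn ℝ (Icc a b) f) (hp : p ∈ Icc a b)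
    (hmax : IsMaxOn f (Icc a b) p) : AntitoneOn f (Icc p b) := by
  intro x hx y hy hxy
  have hyI : y ∈ Icc a b := ⟨hp.1.trans hy.1, hy.2⟩
  simpa only [min_eq_right (isMaxOn_iff.1 hmax y hyI)] using hf.min_le_of_mem_Icc hp hyI ⟨hx.1, hxy⟩

theorem lintegral_enorm_rightDeriv_of_concaveOn (hf : ConcaveOn ℝ (Icc a b) f)
    (hc : ContinuousOn f (Icc a b)) (hp : p ∈ Icc a b) (hmax : IsMaxOn f (Icc a b) p) :
    ∫⁻ x in Ioo a b, ‖derivWithin f (Ioi x) x‖ₑ = ENNReal.ofReal (2 * f p - f a - f b) := by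
  have hder : ∀ x ∈ Ioo a b, HasDerivWithinAt f (derivWithin f (Ioi x) x) (Ioi x) x :=
    fun x hx => by
      simpa using (hf.neg.hasDerivWithinAt_rightDeriv_of_mem_interior
        (by rwa [interior_Icc])).neg.differentiableWithinAt.hasDerivWithinAt
  have hleft := lintegral_enorm_rightDeriv_of_monotoneOn hp.1
    (hc.mono (Icc_subset_Icc_right hp.2)) (monotoneOn_of_concaveOn_of_isMaxOn hf hp hmax)
    fun x hx => hder x ⟨hx.1, hx.2.trans_le hp.2⟩
  have hright := lintegral_enorm_rightDeriv_of_monotoneOn hp.2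
    (hc.mono (Icc_subset_Icc_left hp.1)).neg (antitoneOn_of_concaveOn_of_isMaxOn hf hp hmax).neg
    fun x hx => (hder x ⟨hp.1.trans_lt hx.1, hx.2⟩).neg
  have hfa : f a ≤ f p := hmax (left_mem_Icc.2 (hp.1.trans hp.2))
  have hfb : f b ≤ f p := hmax (right_mem_Icc.2 (hp.1.trans hp.2))
  simp only [enorm_neg, Pi.neg_apply] at hright
  rw [setLIntegral_Ioo_add hp.1 hp.2, hleft, hright,
    ← ENNReal.ofReal_add (by linarith) (by linarith)]
  congr 1
  ring

end OneVariable

section Chords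

variable {E F : Type*} [NormedAddCommGroup E] [NormedSpace ℝ E] [NormedAddCommGroup F]
  [NormedSpace ℝ F] {K : Set E} {u : E → ℝ} {x y : E}

theorem preimage_interior_eq_interior_preimage_of_convex (hK : Convex ℝ K) {γ : F →ᵃ[ℝ] E}
    (hγ : Continuous γ) (hne : (γ ⁻¹' interior K).Nonempty) :
    γ ⁻¹' interior K = interior (γ ⁻¹' K) := by
  refine (preimage_interior_subset_interior_preimage hγ).antisymm ?_
  obtain ⟨s₀, hs₀⟩ := hne
  have hopen : IsOpen (γ ⁻¹' interior K) := isOpen_interior.preimage hγ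
  have hdense : γ ⁻¹' K ⊆ closure (γ ⁻¹' interior K) := fun s hs => by
    have hseg : openSegment ℝ s₀ s ⊆ γ ⁻¹' interior K := by
      rw [← image_subset_iff, image_openSegment]
      exact hK.openSegment_interior_self_subset_interior hs₀ hs
    exact closure_mono hseg (closure_openSegment (𝕜 := ℝ) s₀ s ▸ right_mem_segment ℝ s₀ s)
  calc interior (γ ⁻¹' K) ⊆ interior (closure (γ ⁻¹' interior K)) := interior_mono hdense
    _ = γ ⁻¹' interior K := by
      rw [(hK.interior.affine_preimage γ).interior_closure_eq_interior_of_nonempty_interior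
        ⟨s₀, by rwa [hopen.interior_eq]⟩, hopen.interior_eq]

theorem isClosedEmbedding_lineMap (hxy : x ≠ y) :
    Topology.IsClosedEmbedding (AffineMap.lineMap x y : ℝ → E) := by
  have h := (Homeomorph.addRight x).isClosedEmbedding.comp
    (isClosedEmbedding_smul_left (𝕜 := ℝ) (sub_ne_zero.2 hxy.symm))
  exact h

theorem exists_chord (hKc : IsCompact K) (hK : Convex ℝ K) (hxy : x ≠ y) {s₀ : ℝ}
    (hs₀ : AffineMap.lineMap x y s₀ ∈ interior K) :
    ∃ a b : ℝ, a < b ∧ AffineMap.lineMap x y ⁻¹' K = Icc a b ∧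
      AffineMap.lineMap x y ⁻¹' interior K = Ioo a b ∧
      AffineMap.lineMap x y a ∈ frontier K ∧ AffineMap.lineMap x y b ∈ frontier K := by
  have hemb := isClosedEmbedding_lineMap hxy
  have hconn : IsConnected (AffineMap.lineMap x y ⁻¹' K) :=
    ⟨⟨s₀, interior_subset (s := K) hs₀⟩,
      (hK.affine_preimage (AffineMap.lineMap x y)).isPreconnected⟩
  obtain ⟨a, b, hab⟩ : ∃ a b, AffineMap.lineMap x y ⁻¹' K = Icc a b :=
    ⟨_, _, eq_Icc_of_connected_compact hconn (hemb.isCompact_preimage hKc)⟩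
  have hint : AffineMap.lineMap x y ⁻¹' interior K = Ioo a b := by
    rw [preimage_interior_eq_interior_preimage_of_convex hK hemb.continuous ⟨s₀, hs₀⟩, hab,
      interior_Icc]
  have hlt : a < b := nonempty_Ioo.1 (hint ▸ ⟨s₀, hs₀⟩)
  have hfrontier : ∀ s ∈ Icc a b, s ∉ Ioo a b → AffineMap.lineMap x y s ∈ frontier K :=
    fun s hs hs' => by
      rw [← hab] at hs
      rw [← hint] at hs'
      exact hKc.isClosed.frontier_eq ▸ ⟨hs, hs'⟩
  exact ⟨a, b, hlt, hab, hint, hfrontier a (left_mem_Icc.2 hlt.le) left_notMem_Ioo,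
    hfrontier b (right_mem_Icc.2 hlt.le) right_notMem_Ioo⟩

theorem nonneg_of_concaveOn_of_frontier [Nontrivial E] (hKc : IsCompact K)
    (hu : ConcaveOn ℝ K u) (hzero : ∀ z ∈ frontier K, u z = 0) {z : E} (hz : z ∈ K) :
    0 ≤ u z := by
  by_cases hzi : z ∈ interior K
  · obtain ⟨y, hzy⟩ := exists_ne z
    obtain ⟨a, b, hab, hK, hint, ha, hb⟩ := exists_chord hKc hu.1 hzy.symm
      (s₀ := 0) (by rwa [AffineMap.lineMap_apply_zero])
    have h0 : (0 : ℝ) ∈ Ioo a b := by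
      rwa [← hint, mem_preimage, AffineMap.lineMap_apply_zero]
    have hchord : ConcaveOn ℝ (Icc a b) (u ∘ AffineMap.lineMap z y) :=
      hK ▸ hu.comp_affineMap (AffineMap.lineMap z y)
    have := hchord.min_le_of_mem_Icc (left_mem_Icc.2 hab.le) (right_mem_Icc.2 hab.le)
      (Ioo_subset_Icc_self h0)
    simpa [hzero _ ha, hzero _ hb] using this
  · exact (hzero z (hKc.isClosed.frontier_eq ▸ ⟨hz, hzi⟩)).ge

theorem lintegral_enorm_fderiv_lineMap (hKc : IsCompact K) (hcont : ContinuousOn u K)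
    (hu : ConcaveOn ℝ K u) (hzero : ∀ z ∈ frontier K, u z = 0) (hxy : x ≠ y)
    (hdiff : ∀ᵐ s : ℝ, AffineMap.lineMap x y s ∈ interior K →
      DifferentiableAt ℝ u (AffineMap.lineMap x y s)) :
    ∫⁻ s in (AffineMap.lineMap x y : ℝ → E) ⁻¹' interior K,
        ‖fderiv ℝ u (AffineMap.lineMap x y s) (y - x)‖ₑ =
      ENNReal.ofReal (2 * sSup (u '' (K ∩ range (AffineMap.lineMap x y : ℝ → E)))) := by
  set γ : ℝ →ᵃ[ℝ] E := AffineMap.lineMap x y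
  rcases (γ ⁻¹' interior K).eq_empty_or_nonempty with hempty | ⟨s₀, hs₀⟩
  · have hsup : sSup (u '' (K ∩ range γ)) ≤ 0 := by
      refine Real.sSup_nonpos ?_
      rintro _ ⟨_, ⟨hz, s, rfl⟩, rfl⟩
      have hs : γ s ∉ interior K := fun hs => notMem_empty s (hempty ▸ hs)
      exact (hzero _ (hKc.isClosed.frontier_eq ▸ ⟨hz, hs⟩)).le
    rw [hempty, setLIntegral_empty, ENNReal.ofReal_of_nonpos (by linarith)]
  obtain ⟨a, b, hab, hK, hint, ha, hb⟩ := exists_chord hKc hu.1 hxy hs₀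
  have hconc : ConcaveOn ℝ (Icc a b) (u ∘ γ) := hK ▸ hu.comp_affineMap γ
  have hcont' : ContinuousOn (u ∘ γ) (Icc a b) :=
    hcont.comp (isClosedEmbedding_lineMap hxy).continuous.continuousOn (hK ▸ mapsTo_preimage γ K)
  obtain ⟨p, hp, hmax⟩ := isCompact_Icc.exists_isMaxOn (nonempty_Icc.2 hab.le) hcont'
  have hsup : sSup (u '' (K ∩ range γ)) = (u ∘ γ) p := by
    rw [inter_comm, ← image_preimage_eq_range_inter, ← image_comp, hK]
    exact IsGreatest.csSup_eq ⟨mem_image_of_mem _ hp, forall_mem_image.2 hmax⟩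
  have hvar := lintegral_enorm_rightDeriv_of_concaveOn hconc hcont' hp hmax
  rw [show (u ∘ γ) a = 0 from hzero _ ha, show (u ∘ γ) b = 0 from hzero _ hb, sub_zero,
    sub_zero] at hvar
  rw [hint, hsup, ← hvar]
  refine setLIntegral_congr_fun_ae measurableSet_Ioo ?_
  filter_upwards [hdiff] with s hs hsI
  have hchain := (hs (hint.ge hsI)).hasFDerivAt.comp_hasDerivAt s AffineMap.hasDerivAt_lineMap
  rw [hchain.hasDerivWithinAt.derivWithin (uniqueDiffWithinAt_Ioi s)]

end Chords

theorem ae_differentiableAt_of_concaveOn_of_mem_interior {E : Type*} [NormedAddCommGroup E]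
    [NormedSpace ℝ E] [FiniteDimensional ℝ E] [MeasurableSpace E] [BorelSpace E] {μ : Measure E}
    [μ.IsAddHaarMeasure] {K : Set E} {u : E → ℝ} (hu : ConcaveOn ℝ K u) :
    ∀ᵐ z ∂μ, z ∈ interior K → DifferentiableAt ℝ u z := by
  suffices μ {z | z ∈ interior K ∧ ¬ DifferentiableAt ℝ u z} = 0 by
    simpa only [ae_iff, Classical.not_imp] using this
  refine measure_null_of_locally_null _ fun z hz => ?_
  obtain ⟨C, t, ht, hC⟩ := hu.locallyLipschitzOn_interior hz.1
  rw [isOpen_interior.nhdsWithin_eq hz.1] at ht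
  have hrademacher := (hC.mono interior_subset).ae_differentiableWithinAt_of_mem (μ := μ)
  refine ⟨interior t ∩ {z | z ∈ interior K ∧ ¬ DifferentiableAt ℝ u z},
    Filter.inter_mem (mem_nhdsWithin_of_mem_nhds (interior_mem_nhds.2 ht)) self_mem_nhdsWithin, ?_⟩
  refine measure_mono_null ?_ (ae_iff.1 hrademacher)
  intro w hw hdiff
  exact hw.2.2 ((hdiff hw.1).differentiableAt (isOpen_interior.mem_nhds hw.1))

/-- The supremum of `u` over the slice of `K` on which `f` takes the value `t`. It is `0` when that
slice is empty, by the convention `sSup ∅ = 0`. -/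
noncomputable def fiberSup {X Y : Type*} (f : X → Y) (K : Set X) (u : X → ℝ) (t : Y) : ℝ :=
  sSup (u '' (K ∩ f ⁻¹' {t}))

section LayerCake

variable {X Y : Type*} [TopologicalSpace X] [TopologicalSpace Y] {f : X → Y} {K : Set X} {u : X → ℝ}

theorem isCompact_superlevel [T2Space X] (hK : IsCompact K) (hu : ContinuousOn u K) (s : ℝ) :
    IsCompact {z ∈ K | s ≤ u z} :=
  hK.of_isClosed_subset (hu.preimage_isClosed_of_isClosed hK.isClosed isClosed_Ici)
    inter_subset_left

theorem le_fiberSup_iff [T1Space Y] (hf : Continuous f) (hK : IsCompact K) (hu : ContinuousOn u K)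
    {s : ℝ} (hs : 0 < s) {t : Y} : s ≤ fiberSup f K u t ↔ t ∈ f '' {z ∈ K | s ≤ u z} := by
  have hslice : IsCompact (u '' (K ∩ f ⁻¹' {t})) :=
    (hK.inter_right (isClosed_singleton.preimage hf)).image_of_continuousOn
      (hu.mono inter_subset_left)
  constructor
  · intro hst
    have hne : (u '' (K ∩ f ⁻¹' {t})).Nonempty := by
      rw [nonempty_iff_ne_empty]
      intro hempty
      rw [fiberSup, hempty, Real.sSup_empty] at hst
      exact hs.not_ge hst
    obtain ⟨z, ⟨hz, hzt⟩, huz⟩ := hslice.sSup_mem hne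
    exact ⟨z, ⟨hz, hst.trans_eq huz.symm⟩, hzt⟩
  · rintro ⟨z, ⟨hz, hsz⟩, rfl⟩
    exact hsz.trans (le_csSup hslice.bddAbove (mem_image_of_mem u ⟨hz, rfl⟩))

theorem lintegral_fiberSup [T2Space X] [T2Space Y] [MeasurableSpace Y] [BorelSpace Y]
    (μ : Measure Y) (hf : Continuous f) (hK : IsCompact K) (hu : ContinuousOn u K)
    (hnonneg : ∀ z ∈ K, 0 ≤ u z) :
    ∫⁻ t, ENNReal.ofReal (fiberSup f K u t) ∂μ =
      ∫⁻ s in Ioi 0, μ (f '' {z ∈ K | s ≤ u z}) := by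
  have hsup : ∀ t, 0 ≤ fiberSup f K u t := fun t =>
    Real.sSup_nonneg (forall_mem_image.2 fun z hz => hnonneg z hz.1)
  have hmeas : Measurable (fiberSup f K u) := measurable_of_Ici fun s => by
    rcases le_or_gt s 0 with hs | hs
    · convert MeasurableSet.univ
      exact eq_univ_of_forall fun t => hs.trans (hsup t)
    · have : fiberSup f K u ⁻¹' Ici s = f '' {z ∈ K | s ≤ u z} :=
        ext fun t => le_fiberSup_iff hf hK hu hs
      exact this ▸ ((isCompact_superlevel hK hu s).image hf).measurableSet
  rw [lintegral_eq_lintegral_meas_le μ (.of_forall hsup) hmeas.aemeasurable]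
  refine setLIntegral_congr_fun measurableSet_Ioi fun s hs => congrArg μ ?_
  exact ext fun t => le_fiberSup_iff hf hK hu hs

end LayerCake

section Frame

variable {h : ℝ × ℝ}

/-- The coordinate along the normal `(-h.2, h.1)` of `h`, whose level sets are the lines parallel
to `h`. -/
noncomputable def normalForm (h : ℝ × ℝ) : ℝ × ℝ →L[ℝ] ℝ :=
  (-h.2) • ContinuousLinearMap.fst ℝ ℝ ℝ + h.1 • ContinuousLinearMap.snd ℝ ℝ ℝ

theorem normalForm_apply (h z : ℝ × ℝ) : normalForm h z = -h.2 * z.1 + h.1 * z.2 := rfl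

/-- The linear map sending the standard basis to `h` and its normal `(-h.2, h.1)`; it is the
rotation adapted to lines parallel to `h` when `h` is a unit vector. -/
noncomputable def frameMap (h : ℝ × ℝ) : ℝ × ℝ →ₗ[ℝ] ℝ × ℝ :=
  Matrix.toLin (Module.Basis.finTwoProd ℝ) (Module.Basis.finTwoProd ℝ) !![h.1, -h.2; h.2, h.1]

theorem frameMap_apply (h z : ℝ × ℝ) :
    frameMap h z = (h.1 * z.1 + -h.2 * z.2, h.2 * z.1 + h.1 * z.2) :=
  Matrix.toLin_finTwoProd_apply _ _ _ _ _

theorem frameMap_eq_lineMap (h : ℝ × ℝ) (s t : ℝ) :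
    frameMap h (s, t) =
      AffineMap.lineMap (t • (-h.2, h.1) : ℝ × ℝ) (t • (-h.2, h.1) + h) s := by
  rw [frameMap_apply, AffineMap.lineMap_apply_module', add_sub_cancel_left]
  ext <;> simp only [Prod.fst_add, Prod.snd_add, Prod.smul_fst, Prod.smul_snd, smul_eq_mul] <;> ring

theorem normalForm_preimage_singleton (hh : h.1 ^ 2 + h.2 ^ 2 = 1) (t : ℝ) :
    normalForm h ⁻¹' {t} = range fun s => frameMap h (s, t) := by
  ext z
  rw [mem_preimage, mem_singleton_iff, mem_range]
  constructor
  · rintro rfl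
    refine ⟨h.1 * z.1 + h.2 * z.2, ?_⟩
    rw [frameMap_apply, normalForm_apply]
    ext
    · linear_combination z.1 * hh
    · linear_combination z.2 * hh
  · rintro ⟨s, rfl⟩
    rw [frameMap_apply, normalForm_apply]
    linear_combination t * hh

theorem measurePreserving_frameMap (hh : h.1 ^ 2 + h.2 ^ 2 = 1) :
    MeasurePreserving (frameMap h) := by
  have hdet : LinearMap.det (frameMap h) = 1 := by
    rw [frameMap, LinearMap.det_toLin, Matrix.det_fin_two_of]
    linear_combination hh
  refine ⟨(LinearMap.continuous_of_finiteDimensional _).measurable, ?_⟩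
  rw [Measure.map_linearMap_addHaar_eq_smul_addHaar _ (by rw [hdet]; exact one_ne_zero), hdet,
    inv_one, abs_one, ENNReal.ofReal_one, one_smul]

theorem lintegral_eq_lintegral_lintegral_frameMap (hh : h.1 ^ 2 + h.2 ^ 2 = 1)
    {g : ℝ × ℝ → ℝ≥0∞} (hg : Measurable g) :
    ∫⁻ z, g z = ∫⁻ t, ∫⁻ s, g (frameMap h (s, t)) := by
  have hframe := measurePreserving_frameMap hh
  rw [← hframe.lintegral_comp hg, Measure.volume_eq_prod,
    lintegral_prod_symm' (fun w => g (frameMap h w)) (hg.comp hframe.measurable)]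

theorem ae_ae_frameMap_of_ae (hh : h.1 ^ 2 + h.2 ^ 2 = 1) {p : ℝ × ℝ → Prop} (hp : ∀ᵐ z, p z) :
    ∀ᵐ t : ℝ, ∀ᵐ s : ℝ, p (frameMap h (s, t)) := by
  have hswap : ∀ᵐ w : ℝ × ℝ, p (frameMap h w.swap) :=
    (measurePreserving_frameMap hh |>.comp
      Measure.measurePreserving_swap).quasiMeasurePreserving.ae hp
  exact Measure.ae_ae_of_ae_prod hswap

theorem lintegral_enorm_fderiv_eq_lintegral_fiberSup {Ω : Set (ℝ × ℝ)} {u : ℝ × ℝ → ℝ}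
    (hΩ : IsCompact Ω) (hcont : ContinuousOn u Ω) (hu : ConcaveOn ℝ Ω u)
    (hzero : ∀ z ∈ frontier Ω, u z = 0) (hh : h.1 ^ 2 + h.2 ^ 2 = 1) :
    ∫⁻ z in Ω, ‖fderiv ℝ u z h‖ₑ =
      ∫⁻ t, ENNReal.ofReal (2 * fiberSup (normalForm h) Ω u t) := by
  have hmeas : Measurable ((interior Ω).indicator fun z => ‖fderiv ℝ u z h‖ₑ) :=
    (measurable_fderiv_apply_const ℝ u h).enorm.indicator isOpen_interior.measurableSet
  rw [← setLIntegral_congr (interior_ae_eq_of_null_frontier (hu.1.addHaar_frontier volume)),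
    ← lintegral_indicator isOpen_interior.measurableSet,
    lintegral_eq_lintegral_lintegral_frameMap hh hmeas]
  have hh0 : h ≠ 0 := by
    rintro rfl
    norm_num at hh
  refine lintegral_congr_ae ?_
  filter_upwards [ae_ae_frameMap_of_ae hh (ae_differentiableAt_of_concaveOn_of_mem_interior hu)]
    with t ht
  simp only [frameMap_eq_lineMap] at ht
  have hchord := lintegral_enorm_fderiv_lineMap hΩ hcont hu hzero (left_ne_add.2 hh0) ht
  rw [add_sub_cancel_left, ← lintegral_indicator (isOpen_interior.preimage
    AffineMap.lineMap_continuous).measurableSet] at hchord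
  rw [fiberSup, normalForm_preimage_singleton hh]
  simp only [frameMap_eq_lineMap]
  exact hchord

end Frame

section Width

variable {K : Set (ℝ × ℝ)} {h P Q : ℝ × ℝ}

theorem widthPar_eq_diam (hK : Bornology.IsBounded K) (h : ℝ × ℝ) :
    widthPar K h = Metric.diam (normalForm h '' K) :=
  (Real.diam_eq ((normalForm h).lipschitz.isBounded_image hK)).symm

theorem widthPar_nonneg (hK : Bornology.IsBounded K) (h : ℝ × ℝ) : 0 ≤ widthPar K h :=
  widthPar_eq_diam hK h ▸ Metric.diam_nonneg

theorem widthPar_mono {L : Set (ℝ × ℝ)} (hL : Bornology.IsBounded L) (hKL : K ⊆ L) (h : ℝ × ℝ) :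
    widthPar K h ≤ widthPar L h := by
  rw [widthPar_eq_diam hL, widthPar_eq_diam (hL.subset hKL)]
  exact Metric.diam_mono (image_mono hKL) ((normalForm h).lipschitz.isBounded_image hL)

theorem abs_normalForm_sub_le_widthPar (hK : Bornology.IsBounded K) (h : ℝ × ℝ) (hP : P ∈ K)
    (hQ : Q ∈ K) : |normalForm h (Q - P)| ≤ widthPar K h := by
  rw [widthPar_eq_diam hK, map_sub, ← Real.dist_eq]
  exact Metric.dist_le_diam_of_mem ((normalForm h).lipschitz.isBounded_image hK)
    (mem_image_of_mem _ hQ) (mem_image_of_mem _ hP)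

theorem exists_normalForm_sub_eq_widthPar (hK : IsCompact K) (hne : K.Nonempty) (h : ℝ × ℝ) :
    ∃ P ∈ K, ∃ Q ∈ K, normalForm h (Q - P) = widthPar K h := by
  have hcpt : IsCompact (normalForm h '' K) := hK.image (normalForm h).continuous
  obtain ⟨P, hP, hinf⟩ := hcpt.sInf_mem (hne.image _)
  obtain ⟨Q, hQ, hsup⟩ := hcpt.sSup_mem (hne.image _)
  exact ⟨P, hP, Q, hQ, by rw [map_sub, hinf, hsup]; rfl⟩

theorem normalForm_image_eq_Icc (hK : IsCompact K) (hconv : Convex ℝ K) (hne : K.Nonempty)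
    (h : ℝ × ℝ) :
    normalForm h '' K = Icc (sInf (normalForm h '' K)) (sSup (normalForm h '' K)) :=
  eq_Icc_of_connected_compact
    ⟨hne.image _, hconv.isPreconnected.image _ (normalForm h).continuous.continuousOn⟩
    (hK.image (normalForm h).continuous)

theorem volume_normalForm_image (hK : IsCompact K) (hconv : Convex ℝ K) (h : ℝ × ℝ) :
    volume (normalForm h '' K) = ENNReal.ofReal (widthPar K h) := by
  rcases K.eq_empty_or_nonempty with rfl | hne
  · simp [widthPar]
  · rw [normalForm_image_eq_Icc hK hconv hne, Real.volume_Icc]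
    rfl

theorem normalForm_mem_Ioo (hK : IsCompact K) (hconv : Convex ℝ K) (hh : h.1 ^ 2 + h.2 ^ 2 = 1)
    (hP : P ∈ interior K) :
    normalForm h P ∈ Ioo (sInf (normalForm h '' K)) (sSup (normalForm h '' K)) := by
  have hsurj : Function.Surjective (normalForm h) := fun t =>
    preimage_singleton_nonempty.1 (normalForm_preimage_singleton hh t ▸ range_nonempty _)
  rw [← interior_Icc, ← normalForm_image_eq_Icc hK hconv ⟨P, interior_subset hP⟩]
  exact (normalForm h).isOpenMap hsurj |>.image_interior_subset K (mem_image_of_mem _ hP)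

theorem widthPar_pos (hK : IsCompact K) (hconv : Convex ℝ K) (hint : (interior K).Nonempty)
    (hh : h.1 ^ 2 + h.2 ^ 2 = 1) : 0 < widthPar K h :=
  hint.elim fun _ hP => sub_pos.2 (nonempty_Ioo.1 ⟨_, normalForm_mem_Ioo hK hconv hh hP⟩)

theorem continuous_widthPar (hK : IsCompact K) : Continuous (widthPar K) := by
  have hcont : Continuous fun x : (ℝ × ℝ) × ℝ × ℝ => normalForm x.1 x.2 := by
    simp only [normalForm_apply]
    fun_prop
  exact (hK.continuous_sSup hcont).sub (hK.continuous_sInf hcont)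

theorem isCompact_unitCircle : IsCompact {h : ℝ × ℝ | h.1 ^ 2 + h.2 ^ 2 = 1} := by
  refine (isCompact_Icc (a := ((-1, -1) : ℝ × ℝ)) (b := (1, 1))).of_isClosed_subset
    (isClosed_eq (by fun_prop) continuous_const) fun h (hh : h.1 ^ 2 + h.2 ^ 2 = 1) => ?_
  exact ⟨⟨by nlinarith, by nlinarith⟩, ⟨by nlinarith, by nlinarith⟩⟩

end Width

section IntervalIntegral

variable {f : ℝ → ℝ} {a b : ℝ}

theorem intervalIntegral_le_of_antitoneOn (hab : a ≤ b) (hf : AntitoneOn f (Icc a b)) :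
    ∫ x in a..b, f x ≤ (b - a) * f a := by
  rw [← smul_eq_mul, ← intervalIntegral.integral_const]
  refine intervalIntegral.integral_mono_on hab ?_ intervalIntegrable_const
    fun x hx => hf (left_mem_Icc.2 hab) hx hx.1
  exact AntitoneOn.intervalIntegrable (by rwa [uIcc_of_le hab])

theorem le_two_mul_intervalIntegral_of_concaveOn (hab : a ≤ b) (hf : ConcaveOn ℝ (Icc a b) f)
    (hint : IntervalIntegrable f volume a b) :
    (b - a) * (f a + f b) ≤ 2 * ∫ x in a..b, f x := by
  have hrefl : IntervalIntegrable (fun x => f (a + b - x)) volume a b := by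
    simpa using (hint.comp_sub_left (a + b)).symm
  have hle : ∀ x ∈ Icc a b, f a + f b ≤ f x + f (a + b - x) := by
    intro x hx
    rw [← segment_eq_Icc hab] at hx
    obtain ⟨s, t, hs, ht, hst, rfl⟩ := hx
    have h₁ := hf.2 (left_mem_Icc.2 hab) (right_mem_Icc.2 hab) hs ht hst
    have h₂ := hf.2 (left_mem_Icc.2 hab) (right_mem_Icc.2 hab) ht hs (by rwa [add_comm])
    obtain rfl : t = 1 - s := by linarith
    simp only [smul_eq_mul] at h₁ h₂ ⊢
    rw [show a + b - (s * a + (1 - s) * b) = (1 - s) * a + s * b by ring]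
    linarith
  calc (b - a) * (f a + f b) = ∫ _ in a..b, f a + f b := by
        rw [intervalIntegral.integral_const, smul_eq_mul]
    _ ≤ ∫ x in a..b, f x + f (a + b - x) :=
        intervalIntegral.integral_mono_on hab intervalIntegrable_const (hint.add hrefl) hle
    _ = 2 * ∫ x in a..b, f x := by
        rw [intervalIntegral.integral_add hint hrefl, intervalIntegral.integral_comp_sub_left f,
          add_sub_cancel_right, add_sub_cancel_left, two_mul]

end IntervalIntegral

section LevelWidth

variable {Ω : Set (ℝ × ℝ)} {u : ℝ × ℝ → ℝ} {h z : ℝ × ℝ} {k : ℝ}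

/-- The width parallel to `h` of the superlevel set of `u` in `Ω` at height `s`. -/
noncomputable def levelWidth (Ω : Set (ℝ × ℝ)) (u : ℝ × ℝ → ℝ) (h : ℝ × ℝ) (s : ℝ) : ℝ :=
  widthPar {z ∈ Ω | s ≤ u z} h

theorem levelWidth_nonneg (hΩ : Bornology.IsBounded Ω) (s : ℝ) : 0 ≤ levelWidth Ω u h s :=
  widthPar_nonneg (hΩ.subset (sep_subset _ _)) h

theorem antitone_levelWidth (hΩ : Bornology.IsBounded Ω) : Antitone (levelWidth Ω u h) :=
  fun _ _ hst => widthPar_mono (hΩ.subset (sep_subset _ _)) (fun _ hz => ⟨hz.1, hst.trans hz.2⟩) h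

theorem levelWidth_zero (hnonneg : ∀ z ∈ Ω, 0 ≤ u z) : levelWidth Ω u h 0 = widthPar Ω h := by
  rw [levelWidth, sep_eq_self_iff_mem_true.2 hnonneg]

theorem levelWidth_eq_zero_of_forall_lt {s : ℝ} (hs : ∀ z ∈ Ω, u z < s) :
    levelWidth Ω u h s = 0 := by
  have hempty : {z ∈ Ω | s ≤ u z} = ∅ := sep_eq_empty_iff_mem_false.2 fun z hz => (hs z hz).not_ge
  simp [levelWidth, hempty, widthPar]

theorem concaveOn_levelWidth (hΩ : IsCompact Ω) (hcont : ContinuousOn u Ω)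
    (hu : ConcaveOn ℝ Ω u) (hz : z ∈ Ω) : ConcaveOn ℝ (Iic (u z)) (levelWidth Ω u h) := by
  refine ⟨convex_Iic _, fun s hs t ht a b ha hb hab => ?_⟩
  have hlevel := isCompact_superlevel hΩ hcont
  obtain ⟨P, hP, Q, hQ, hPQ⟩ := exists_normalForm_sub_eq_widthPar (hlevel s) ⟨z, hz, hs⟩ h
  obtain ⟨P', hP', Q', hQ', hPQ'⟩ := exists_normalForm_sub_eq_widthPar (hlevel t) ⟨z, hz, ht⟩ h
  have hcombo : ∀ p ∈ {z ∈ Ω | s ≤ u z}, ∀ q ∈ {z ∈ Ω | t ≤ u z},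
      a • p + b • q ∈ {z ∈ Ω | a • s + b • t ≤ u z} := fun p hp q hq =>
    ⟨hu.1 hp.1 hq.1 ha hb hab, (add_le_add (smul_le_smul_of_nonneg_left hp.2 ha)
      (smul_le_smul_of_nonneg_left hq.2 hb)).trans (hu.2 hp.1 hq.1 ha hb hab)⟩
  calc a • levelWidth Ω u h s + b • levelWidth Ω u h t
      = normalForm h ((a • Q + b • Q') - (a • P + b • P')) := by
        rw [levelWidth, levelWidth, ← hPQ, ← hPQ', ← map_smul, ← map_smul, ← map_add]
        congr 1
        module
    _ ≤ |normalForm h ((a • Q + b • Q') - (a • P + b • P'))| := le_abs_self _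
    _ ≤ levelWidth Ω u h (a • s + b • t) :=
        abs_normalForm_sub_le_widthPar (hlevel _).isBounded h (hcombo P hP P' hP')
          (hcombo Q hQ Q' hQ')

theorem MemU.nonneg (hΩ : IsCompact Ω) (hu : MemU Ω u) : ∀ z ∈ Ω, 0 ≤ u z :=
  fun _ hz => nonneg_of_concaveOn_of_frontier hΩ hu.2.1 hu.2.2.1 hz

theorem lintegral_enorm_fderiv_eq_lintegral_levelWidth (hΩ : IsCompact Ω) (hu : MemU Ω u)
    (hh : h.1 ^ 2 + h.2 ^ 2 = 1) :
    ∫⁻ z in Ω, ‖fderiv ℝ u z h‖ₑ = 2 * ∫⁻ s in Ioi 0, ENNReal.ofReal (levelWidth Ω u h s) := by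
  obtain ⟨hcont, hconc, hzero, -⟩ := id hu
  rw [lintegral_enorm_fderiv_eq_lintegral_fiberSup hΩ hcont hconc hzero hh]
  simp only [ENNReal.ofReal_mul zero_le_two, ENNReal.ofReal_ofNat]
  rw [lintegral_const_mul' _ _ ENNReal.ofNat_ne_top,
    lintegral_fiberSup _ (normalForm h).continuous hΩ hcont (hu.nonneg hΩ)]
  congr! 3 with s
  exact volume_normalForm_image (isCompact_superlevel hΩ hcont s) (hconc.convex_ge s) h

theorem L1N_uh_eq_intervalIntegral (hΩ : IsCompact Ω) (hu : MemU Ω u) (hz : z ∈ Ω)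
    (hmax : IsMaxOn u Ω z) (hh : h.1 ^ 2 + h.2 ^ 2 = 1) :
    L1N Ω (uh h u) = 2 * ∫ s in (0)..(u z), levelWidth Ω u h s := by
  have hL1N : L1N Ω (uh h u) = (∫⁻ z in Ω, ‖fderiv ℝ u z h‖ₑ).toReal :=
    integral_norm_eq_lintegral_enorm (measurable_fderiv_apply_const ℝ u h).aestronglyMeasurable
  rw [hL1N, lintegral_enorm_fderiv_eq_lintegral_levelWidth hΩ hu hh, ENNReal.toReal_mul,
    ENNReal.toReal_ofNat, intervalIntegral.integral_of_le (hu.nonneg hΩ z hz),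
    ← setIntegral_eq_of_subset_of_forall_sdiff_eq_zero measurableSet_Ioi Ioc_subset_Ioi_self
      fun s hs => levelWidth_eq_zero_of_forall_lt fun w hw =>
        (hmax hw).trans_lt (not_le.1 fun hle => hs.2 ⟨hs.1, hle⟩),
    integral_eq_lintegral_of_nonneg_ae (.of_forall (levelWidth_nonneg hΩ.isBounded))
      (antitone_levelWidth hΩ.isBounded).measurable.aestronglyMeasurable]

theorem L1N_uh_le_two_mul (hΩ : IsCompact Ω) (hu : MemU Ω u) (hz : z ∈ Ω) (hmax : IsMaxOn u Ω z)
    (hh : h.1 ^ 2 + h.2 ^ 2 = 1) (hk : k ∈ Icc 0 (u z)) :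
    L1N Ω (uh h u) ≤ 2 * (k * widthPar Ω h + (u z - k) * levelWidth Ω u h k) := by
  have hanti : Antitone (levelWidth Ω u h) := antitone_levelWidth hΩ.isBounded
  have hlow := intervalIntegral_le_of_antitoneOn hk.1 (hanti.antitoneOn _)
  have hhigh := intervalIntegral_le_of_antitoneOn hk.2 (hanti.antitoneOn _)
  rw [sub_zero, levelWidth_zero (hu.nonneg hΩ)] at hlow
  rw [L1N_uh_eq_intervalIntegral hΩ hu hz hmax hh,
    ← intervalIntegral.integral_add_adjacent_intervals hanti.intervalIntegrable
      hanti.intervalIntegrable]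
  gcongr

theorem mul_widthPar_add_levelWidth_le_L1N_uh (hΩ : IsCompact Ω) (hu : MemU Ω u) (hz : z ∈ Ω)
    (hmax : IsMaxOn u Ω z) (hh : h.1 ^ 2 + h.2 ^ 2 = 1) (hk : k ∈ Icc 0 (u z)) :
    k * (widthPar Ω h + levelWidth Ω u h k) ≤ L1N Ω (uh h u) := by
  have hanti : Antitone (levelWidth Ω u h) := antitone_levelWidth hΩ.isBounded
  have htrapezoid := le_two_mul_intervalIntegral_of_concaveOn hk.1
    ((concaveOn_levelWidth hΩ hu.1 hu.2.1 hz).subset (fun s hs => hs.2.trans hk.2)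
      (convex_Icc 0 k)) hanti.intervalIntegrable
  rw [sub_zero, levelWidth_zero (hu.nonneg hΩ)] at htrapezoid
  rw [L1N_uh_eq_intervalIntegral hΩ hu hz hmax hh]
  refine htrapezoid.trans ?_
  gcongr
  exact intervalIntegral.integral_mono_interval le_rfl hk.1 hk.2
    (.of_forall (levelWidth_nonneg hΩ.isBounded)) hanti.intervalIntegrable

theorem L1N_uh_le_of_levelWidth_le (hΩ : IsCompact Ω) (hu : MemU Ω u) (hz : z ∈ Ω)
    (hmax : IsMaxOn u Ω z) (hh : h.1 ^ 2 + h.2 ^ 2 = 1) (hone : u z = 1)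
    (hle : ∀ s ∈ Icc (0 : ℝ) 1, levelWidth Ω u h s ≤ (1 - s) * widthPar Ω h) :
    L1N Ω (uh h u) ≤ widthPar Ω h := by
  have hanti : Antitone (levelWidth Ω u h) := antitone_levelWidth hΩ.isBounded
  rw [L1N_uh_eq_intervalIntegral hΩ hu hz hmax hh, hone]
  calc 2 * ∫ s in (0)..1, levelWidth Ω u h s
      ≤ 2 * ∫ s in (0)..1, (1 - s) * widthPar Ω h := by
        gcongr
        exact intervalIntegral.integral_mono_on zero_le_one hanti.intervalIntegrable
          (Continuous.intervalIntegrable (by fun_prop) _ _) hle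
    _ = widthPar Ω h := by
        rw [intervalIntegral.integral_mul_const,
          intervalIntegral.integral_comp_sub_left (fun s => s), integral_id]
        ring

end LevelWidth

section Ratio

variable {Ω : Set (ℝ × ℝ)} {u : ℝ × ℝ → ℝ} {h h₁ h₂ z P Q : ℝ × ℝ} {W w : ℝ}

theorem MemU.exists_isMaxOn_pos (hΩ : IsCompact Ω) (hu : MemU Ω u) (hne : ∃ z ∈ Ω, u z ≠ 0) :
    ∃ z ∈ Ω, IsMaxOn u Ω z ∧ 0 < u z := by
  obtain ⟨w, hw, huw⟩ := hne
  obtain ⟨z, hz, hmax⟩ := hΩ.exists_isMaxOn ⟨w, hw⟩ hu.1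
  exact ⟨z, hz, hmax, ((hu.nonneg hΩ w hw).lt_of_ne' huw).trans_le (hmax hw)⟩

theorem L1N_uh_le_two_mul_widthPar (hΩ : IsCompact Ω) (hu : MemU Ω u) (hz : z ∈ Ω)
    (hmax : IsMaxOn u Ω z) (hh : h.1 ^ 2 + h.2 ^ 2 = 1) :
    L1N Ω (uh h u) ≤ 2 * (u z * widthPar Ω h) := by
  simpa using L1N_uh_le_two_mul hΩ hu hz hmax hh (right_mem_Icc.2 (hu.nonneg hΩ z hz))

theorem mul_widthPar_le_L1N_uh (hΩ : IsCompact Ω) (hu : MemU Ω u) (hz : z ∈ Ω)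
    (hmax : IsMaxOn u Ω z) (hh : h.1 ^ 2 + h.2 ^ 2 = 1) :
    u z * widthPar Ω h ≤ L1N Ω (uh h u) := by
  have hpos := hu.nonneg hΩ z hz
  refine le_trans ?_ (mul_widthPar_add_levelWidth_le_L1N_uh hΩ hu hz hmax hh (right_mem_Icc.2 hpos))
  gcongr
  exact le_add_of_nonneg_right (levelWidth_nonneg hΩ.isBounded _)

theorem L1N_uh_pos (hΩ : IsCompact Ω) (hint : (interior Ω).Nonempty) (hu : MemU Ω u)
    (hne : ∃ z ∈ Ω, u z ≠ 0) (hh : h.1 ^ 2 + h.2 ^ 2 = 1) : 0 < L1N Ω (uh h u) := by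
  obtain ⟨z, hz, hmax, hpos⟩ := hu.exists_isMaxOn_pos hΩ hne
  exact (mul_pos hpos (widthPar_pos hΩ hu.2.1.1 hint hh)).trans_le
    (mul_widthPar_le_L1N_uh hΩ hu hz hmax hh)

theorem L1N_uh_div_le (hΩ : IsCompact Ω) (hint : (interior Ω).Nonempty) (hu : MemU Ω u)
    (hne : ∃ z ∈ Ω, u z ≠ 0) (hh₁ : h₁.1 ^ 2 + h₁.2 ^ 2 = 1) (hh₂ : h₂.1 ^ 2 + h₂.2 ^ 2 = 1) :
    L1N Ω (uh h₁ u) / L1N Ω (uh h₂ u) ≤ 2 * (widthPar Ω h₁ / widthPar Ω h₂) := by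
  obtain ⟨z, hz, hmax, hpos⟩ := hu.exists_isMaxOn_pos hΩ hne
  have hwidth₁ := widthPar_pos hΩ hu.2.1.1 hint hh₁
  have hwidth₂ := widthPar_pos hΩ hu.2.1.1 hint hh₂
  calc L1N Ω (uh h₁ u) / L1N Ω (uh h₂ u)
      ≤ 2 * (u z * widthPar Ω h₁) / (u z * widthPar Ω h₂) :=
        div_le_div₀ (by positivity) (L1N_uh_le_two_mul_widthPar hΩ hu hz hmax hh₁) (by positivity)
          (mul_widthPar_le_L1N_uh hΩ hu hz hmax hh₂)
    _ = 2 * (widthPar Ω h₁ / widthPar Ω h₂) := by field_simp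

theorem sq_add_sq_le_of_forall_widthPar_le (hΩ : Bornology.IsBounded Ω)
    (hW : ∀ h : ℝ × ℝ, h.1 ^ 2 + h.2 ^ 2 = 1 → widthPar Ω h ≤ W) (hP : P ∈ Ω) (hQ : Q ∈ Ω) :
    (Q - P).1 ^ 2 + (Q - P).2 ^ 2 ≤ W ^ 2 := by
  generalize hv : Q - P = v
  rcases (by positivity : 0 ≤ v.1 ^ 2 + v.2 ^ 2).eq_or_lt' with h0 | h0
  · exact h0 ▸ sq_nonneg W
  have hr : √(v.1 ^ 2 + v.2 ^ 2) ≠ 0 := (Real.sqrt_pos.2 h0).ne'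
  have hsq : √(v.1 ^ 2 + v.2 ^ 2) ^ 2 = v.1 ^ 2 + v.2 ^ 2 := Real.sq_sqrt h0.le
  generalize √(v.1 ^ 2 + v.2 ^ 2) = r at hr hsq
  have hunit : (v.2 / r) ^ 2 + (-v.1 / r) ^ 2 = 1 := by
    field_simp
    linarith
  have hnormal : normalForm (v.2 / r, -v.1 / r) v = r := by
    rw [normalForm_apply]
    field_simp
    linarith
  have hle := (abs_normalForm_sub_le_widthPar hΩ (v.2 / r, -v.1 / r) hP hQ).trans (hW _ hunit)
  rw [hv, hnormal] at hle
  rw [← hsq]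
  exact sq_le_sq.2 (hle.trans (le_abs_self W))

theorem eq_smul_of_le_normalForm {v : ℝ × ℝ} (hh : h.1 ^ 2 + h.2 ^ 2 = 1) (hW : 0 ≤ W)
    (hv : v.1 ^ 2 + v.2 ^ 2 ≤ W ^ 2) (hle : W ≤ normalForm h v) : v = W • (-h.2, h.1) := by
  have hdist : (v.1 - W * -h.2) ^ 2 + (v.2 - W * h.1) ^ 2 ≤ 0 := by
    calc (v.1 - W * -h.2) ^ 2 + (v.2 - W * h.1) ^ 2
        = v.1 ^ 2 + v.2 ^ 2 + W ^ 2 - 2 * (W * normalForm h v) := by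
          rw [normalForm_apply]
          linear_combination W ^ 2 * hh
      _ ≤ 0 := by linarith [mul_le_mul_of_nonneg_left hle hW]
  obtain ⟨h₁, h₂⟩ := (add_eq_zero_iff_of_nonneg (sq_nonneg _) (sq_nonneg _)).1
    (hdist.antisymm (by positivity))
  exact Prod.ext (sub_eq_zero.1 (pow_eq_zero_iff two_ne_zero |>.1 h₁))
    (sub_eq_zero.1 (pow_eq_zero_iff two_ne_zero |>.1 h₂))

theorem normalForm_smul_normal (h₁ h₂ : ℝ × ℝ) (W : ℝ) :
    normalForm h₂ (W • (-h₁.2, h₁.1)) = W * (h₁.1 * h₂.1 + h₁.2 * h₂.2) := by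
  simp only [normalForm_apply, Prod.smul_mk, smul_eq_mul]
  ring

theorem exists_gap_of_forall_not_orthogonal (hΩ : IsCompact Ω) (hW0 : 0 < W)
    (hW : ∀ h : ℝ × ℝ, h.1 ^ 2 + h.2 ^ 2 = 1 → widthPar Ω h ≤ W)
    (hw : ∀ h : ℝ × ℝ, h.1 ^ 2 + h.2 ^ 2 = 1 → w ≤ widthPar Ω h)
    (hnot : ¬ ∃ h₁ h₂ : ℝ × ℝ, h₁.1 ^ 2 + h₁.2 ^ 2 = 1 ∧ h₂.1 ^ 2 + h₂.2 ^ 2 = 1 ∧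
      widthPar Ω h₁ = W ∧ widthPar Ω h₂ = w ∧ h₁.1 * h₂.1 + h₁.2 * h₂.2 = 0) :
    ∃ η > 0, ∀ h₁ h₂ : ℝ × ℝ, h₁.1 ^ 2 + h₁.2 ^ 2 = 1 → h₂.1 ^ 2 + h₂.2 ^ 2 = 1 →
      ∀ P ∈ Ω, ∀ Q ∈ Ω, normalForm h₁ (Q - P) ≤ W - η ∨
        w + η ≤ widthPar Ω h₂ + |normalForm h₂ (Q - P)| := by
  let F : (ℝ × ℝ) × (ℝ × ℝ) × (ℝ × ℝ) × ℝ × ℝ → ℝ := fun x =>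
    max (W - normalForm x.1 (x.2.2.2 - x.2.2.1))
      (widthPar Ω x.2.1 + |normalForm x.2.1 (x.2.2.2 - x.2.2.1)| - w)
  have hF : Continuous F := by
    have hwidth := continuous_widthPar hΩ
    simp only [F, normalForm_apply]
    fun_prop
  have hFpos : ∀ x ∈ {h : ℝ × ℝ | h.1 ^ 2 + h.2 ^ 2 = 1} ×ˢ {h : ℝ × ℝ | h.1 ^ 2 + h.2 ^ 2 = 1} ×ˢ
      Ω ×ˢ Ω, 0 < F x := by
    rintro ⟨h₁, h₂, P, Q⟩ ⟨hh₁, hh₂, hP, hQ⟩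
    by_contra! hle
    obtain ⟨hle₁, hle₂⟩ := max_le_iff.1 hle
    have hwidth₁ := (le_abs_self _).trans (abs_normalForm_sub_le_widthPar hΩ.isBounded h₁ hP hQ)
    have habs := abs_nonneg (normalForm h₂ (Q - P))
    have hW₁ := hW h₁ hh₁
    have hw₂ := hw h₂ hh₂
    have hnormal : normalForm h₂ (Q - P) = 0 := abs_eq_zero.1 (by linarith)
    rw [eq_smul_of_le_normalForm hh₁ hW0.le
      (sq_add_sq_le_of_forall_widthPar_le hΩ.isBounded hW hP hQ) (sub_nonpos.1 hle₁),
      normalForm_smul_normal] at hnormal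
    exact hnot ⟨h₁, h₂, hh₁, hh₂, by linarith, by linarith,
      (mul_eq_zero.1 hnormal).resolve_left hW0.ne'⟩
  obtain ⟨η, hη, hle⟩ := (isCompact_unitCircle.prod
    (isCompact_unitCircle.prod (hΩ.prod hΩ))).exists_forall_le' hF.continuousOn hFpos
  refine ⟨η, hη, fun h₁ h₂ hh₁ hh₂ P hP Q hQ => ?_⟩
  refine (le_max_iff.1 (hle (h₁, h₂, P, Q) ⟨hh₁, hh₂, hP, hQ⟩)).imp ?_ ?_ <;> intro <;> linarith

theorem L1N_uh_div_le_max_of_gap (hΩ : IsCompact Ω) (hu : MemU Ω u) (hne : ∃ z ∈ Ω, u z ≠ 0)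
    (hh₁ : h₁.1 ^ 2 + h₁.2 ^ 2 = 1) (hh₂ : h₂.1 ^ 2 + h₂.2 ^ 2 = 1) (hw0 : 0 < w)
    (hW : widthPar Ω h₁ ≤ W) (hw : w ≤ widthPar Ω h₂) {δ η : ℝ} (hδ : δ ∈ Ico 0 1) (hη : 0 < η)
    (hgap : ∀ P ∈ Ω, ∀ Q ∈ Ω, normalForm h₁ (Q - P) ≤ W - η ∨
      w + η ≤ widthPar Ω h₂ + |normalForm h₂ (Q - P)|) :
    L1N Ω (uh h₁ u) / L1N Ω (uh h₂ u) ≤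
      max (2 * (W - δ * η) / w) (2 * W / ((1 - δ) * (w + η))) := by
  obtain ⟨z, hz, hmax, hpos⟩ := hu.exists_isMaxOn_pos hΩ hne
  have hδ0 : 0 ≤ δ := hδ.1
  have hδ1 : 0 < 1 - δ := sub_pos.2 hδ.2
  have hk : (1 - δ) * u z ∈ Icc 0 (u z) := ⟨by positivity, by nlinarith⟩
  have hlevel := isCompact_superlevel hΩ hu.1 ((1 - δ) * u z)
  obtain ⟨P, hP, Q, hQ, hPQ⟩ := exists_normalForm_sub_eq_widthPar hlevel ⟨z, hz, hk.2⟩ h₁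
  have hL1N₁ : 0 ≤ L1N Ω (uh h₁ u) := integral_nonneg fun _ => abs_nonneg _
  rcases hgap P hP.1 Q hQ.1 with hgap₁ | hgap₂
  · have hnum : L1N Ω (uh h₁ u) ≤ u z * (2 * (W - δ * η)) :=
      calc L1N Ω (uh h₁ u)
          ≤ 2 * ((1 - δ) * u z * widthPar Ω h₁ + (u z - (1 - δ) * u z) * (W - η)) := by
            refine (L1N_uh_le_two_mul hΩ hu hz hmax hh₁ hk).trans ?_
            gcongr
            exacts [sub_nonneg.2 hk.2, hPQ.symm.trans_le hgap₁]
        _ ≤ 2 * ((1 - δ) * u z * W + (u z - (1 - δ) * u z) * (W - η)) := by gcongr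
        _ = u z * (2 * (W - δ * η)) := by ring
    have hden : u z * w ≤ L1N Ω (uh h₂ u) :=
      (mul_le_mul_of_nonneg_left hw hpos.le).trans (mul_widthPar_le_L1N_uh hΩ hu hz hmax hh₂)
    refine le_max_of_le_left ?_
    exact (div_le_div₀ (hL1N₁.trans hnum) hnum (by positivity) hden).trans_eq
      (mul_div_mul_left _ _ hpos.ne')
  · have hnum : L1N Ω (uh h₁ u) ≤ u z * (2 * W) := by
      linarith [L1N_uh_le_two_mul_widthPar hΩ hu hz hmax hh₁,
        mul_le_mul_of_nonneg_left hW hpos.le]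
    have hden : u z * ((1 - δ) * (w + η)) ≤ L1N Ω (uh h₂ u) := by
      rw [← mul_assoc, mul_comm (u z)]
      refine le_trans ?_ (mul_widthPar_add_levelWidth_le_L1N_uh hΩ hu hz hmax hh₂ hk)
      have hlevel₂ := abs_normalForm_sub_le_widthPar hlevel.isBounded h₂ hP hQ
      exact mul_le_mul_of_nonneg_left (hgap₂.trans (add_le_add_right hlevel₂ _)) hk.1
    refine le_max_of_le_right ?_
    exact (div_le_div₀ (hL1N₁.trans hnum) hnum (by positivity) hden).trans_eq
      (mul_div_mul_left _ _ hpos.ne')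

theorem exists_lt_forall_L1N_uh_div_le (hΩ : IsCompact Ω) (hW0 : 0 < W) (hw0 : 0 < w)
    (hW : ∀ h : ℝ × ℝ, h.1 ^ 2 + h.2 ^ 2 = 1 → widthPar Ω h ≤ W)
    (hw : ∀ h : ℝ × ℝ, h.1 ^ 2 + h.2 ^ 2 = 1 → w ≤ widthPar Ω h)
    (hnot : ¬ ∃ h₁ h₂ : ℝ × ℝ, h₁.1 ^ 2 + h₁.2 ^ 2 = 1 ∧ h₂.1 ^ 2 + h₂.2 ^ 2 = 1 ∧
      widthPar Ω h₁ = W ∧ widthPar Ω h₂ = w ∧ h₁.1 * h₂.1 + h₁.2 * h₂.2 = 0) :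
    ∃ ρ, 0 ≤ ρ ∧ ρ < 2 * (W / w) ∧ ∀ (u : ℝ × ℝ → ℝ) (h₁ h₂ : ℝ × ℝ), MemU Ω u →
      (∃ z ∈ Ω, u z ≠ 0) → h₁.1 ^ 2 + h₁.2 ^ 2 = 1 → h₂.1 ^ 2 + h₂.2 ^ 2 = 1 →
        L1N Ω (uh h₁ u) / L1N Ω (uh h₂ u) ≤ ρ := by
  obtain ⟨η, hη, hgap⟩ := exists_gap_of_forall_not_orthogonal hΩ hW0 hW hw hnot
  -- Any `δ` with `(1 - δ) * (w + η) > w` works; this one makes the product `w + η / 2`.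
  let δ := η / (2 * (w + η))
  have hδ0 : 0 < δ := by positivity
  have hprod : (1 - δ) * (w + η) = w + η / 2 := by
    simp only [δ]
    field_simp
    ring
  have hδ1 : δ < 1 := sub_pos.1 (pos_of_mul_pos_left (by rw [hprod]; positivity) (by positivity))
  refine ⟨max (2 * (W - δ * η) / w) (2 * W / ((1 - δ) * (w + η))), ?_, max_lt ?_ ?_,
    fun u h₁ h₂ hu hne hh₁ hh₂ => L1N_uh_div_le_max_of_gap hΩ hu hne hh₁ hh₂ hw0 (hW h₁ hh₁)
      (hw h₂ hh₂) ⟨hδ0.le, hδ1⟩ hη (hgap h₁ h₂ hh₁ hh₂)⟩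
  · rw [hprod]
    exact le_max_of_le_right (by positivity)
  · rw [← mul_div_assoc]
    gcongr
    exact sub_lt_self W (by positivity)
  · rw [hprod, ← mul_div_assoc]
    gcongr
    exact lt_add_of_pos_right w (by positivity)

end Ratio

section Roof

theorem exists_lipschitzWith_concaveOn_eq_zero_on_frontier {E : Type*} [NormedAddCommGroup E]
    [NormedSpace ℝ E] {K : Set E} (hK : Convex ℝ K) (hint : (interior K).Nonempty) :
    ∃ (v : E → ℝ) (C : NNReal), LipschitzWith C v ∧ ConcaveOn ℝ univ v ∧
      (∀ z ∈ frontier K, v z = 0) ∧ ∀ z ∈ interior K, 0 < v z := by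
  obtain ⟨z₀, hz₀⟩ := hint
  let s := Homeomorph.subRight z₀ '' K
  have hs : Convex ℝ s := by
    simpa only [s, Homeomorph.coe_subRight, sub_eq_add_neg, add_comm] using hK.translate (-z₀)
  have hs₀ : s ∈ nhds 0 := mem_interior_iff_mem_nhds.1 <|
    (Homeomorph.subRight z₀).image_interior K ▸ ⟨z₀, hz₀, sub_self z₀⟩
  have hgauge : ConvexOn ℝ univ (gauge s) := ⟨convex_univ, fun x _ y _ a b ha hb _ =>
    (gauge_add_le hs (absorbent_nhds_zero hs₀) _ _).trans_eq
      (by rw [gauge_smul_of_nonneg ha, gauge_smul_of_nonneg hb])⟩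
  obtain ⟨C, hC⟩ := hs.lipschitz_gauge hs₀
  refine ⟨fun z => 1 - gauge s (z - z₀), _,
    (LipschitzWith.const 1).sub (hC.comp (LipschitzWith.id.sub (LipschitzWith.const z₀))),
    (concaveOn_const 1 convex_univ).sub ?_, fun z hz => ?_, fun z hz => ?_⟩
  · simpa only [sub_eq_add_neg, preimage_univ, Function.comp_def] using
      hgauge.translate_left (-z₀)
  · exact sub_eq_zero.2 ((gauge_eq_one_iff_mem_frontier hs hs₀).2
      ((Homeomorph.subRight z₀).image_frontier K ▸ mem_image_of_mem _ hz)).symm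
  · exact sub_pos.2 ((gauge_lt_one_iff_mem_interior hs hs₀).2
      ((Homeomorph.subRight z₀).image_interior K ▸ mem_image_of_mem _ hz))

section Tent

variable {c x d s t : ℝ}

/-- The concave piecewise affine function vanishing at `c` and `d` with peak value `1` at `x`,
used with `c < x < d`. -/
noncomputable def tent (c x d t : ℝ) : ℝ := min ((t - c) / (x - c)) ((d - t) / (d - x))

theorem le_tent_iff (hx : x ∈ Ioo c d) :
    s ≤ tent c x d t ↔ t ∈ Icc (c + s * (x - c)) (d - s * (d - x)) := by
  rw [tent, le_min_iff, le_div_iff₀ (sub_pos.2 hx.1), le_div_iff₀ (sub_pos.2 hx.2), mem_Icc,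
    le_sub_iff_add_le', le_sub_comm]

theorem tent_self (hx : x ∈ Ioo c d) : tent c x d x = 1 := by
  rw [tent, div_self (sub_pos.2 hx.1).ne', div_self (sub_pos.2 hx.2).ne', min_self]

theorem tent_le_one (hx : x ∈ Ioo c d) : tent c x d t ≤ 1 := by
  rcases le_total t x with htx | htx
  · exact min_le_of_left_le (div_le_one_of_le₀ (by gcongr) (sub_nonneg.2 hx.1.le))
  · exact min_le_of_right_le (div_le_one_of_le₀ (by gcongr) (sub_nonneg.2 hx.2.le))

theorem concaveOn_tent (hx : x ∈ Ioo c d) : ConcaveOn ℝ univ (tent c x d) := by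
  have hleft := ((concaveOn_id convex_univ).sub (convexOn_const c convex_univ)).smul
    (inv_nonneg.2 (sub_nonneg.2 hx.1.le))
  have hright := ((concaveOn_const d convex_univ).sub (convexOn_id convex_univ)).smul
    (inv_nonneg.2 (sub_nonneg.2 hx.2.le))
  exact (hleft.inf hright).congr fun t _ => by
    simp only [tent, div_eq_inv_mul, Pi.inf_apply, smul_eq_mul, Pi.sub_apply, id]

theorem exists_lipschitzWith_tent (c x d : ℝ) : ∃ C, LipschitzWith C (tent c x d) := by
  have hleft := (lipschitzWith_smul (x - c)⁻¹).comp (LipschitzWith.id.sub (LipschitzWith.const c))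
  have hright := (lipschitzWith_smul (d - x)⁻¹).comp ((LipschitzWith.const d).sub LipschitzWith.id)
  have htent : tent c x d = fun t => min ((x - c)⁻¹ • (t - c)) ((d - x)⁻¹ • (d - t)) :=
    funext fun t => by simp only [tent, div_eq_inv_mul, smul_eq_mul]
  exact htent ▸ ⟨_, hleft.min hright⟩

end Tent

variable {Ω : Set (ℝ × ℝ)} {u : ℝ × ℝ → ℝ} {h h₁ h₂ z P Q : ℝ × ℝ}

theorem memU_of_lipschitzWith {C : NNReal} (hu : LipschitzWith C u) (hconc : ConcaveOn ℝ Ω u)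
    (hzero : ∀ z ∈ frontier Ω, u z = 0) : MemU Ω u :=
  ⟨hu.continuous.continuousOn, hconc, hzero, C, fun _ _ _ hg => hg.le_of_lipschitz hu⟩

theorem levelWidth_le_of_le_tent (hΩ : IsCompact Ω) {x : ℝ}
    (hx : x ∈ Ioo (sInf (normalForm h '' Ω)) (sSup (normalForm h '' Ω)))
    (hu : ∀ z ∈ Ω, u z ≤ tent (sInf (normalForm h '' Ω)) x (sSup (normalForm h '' Ω))
      (normalForm h z)) {s : ℝ} (hs : s ≤ 1) :
    levelWidth Ω u h s ≤ (1 - s) * widthPar Ω h := by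
  set c := sInf (normalForm h '' Ω)
  set d := sSup (normalForm h '' Ω)
  have hwidth : widthPar Ω h = d - c := rfl
  have hle : c + s * (x - c) ≤ d - s * (d - x) := by nlinarith [hx.1.trans hx.2]
  have hsub : normalForm h '' {z ∈ Ω | s ≤ u z} ⊆ Icc (c + s * (x - c)) (d - s * (d - x)) :=
    image_subset_iff.2 fun z hz => (le_tent_iff hx).1 (hz.2.trans (hu z hz.1))
  calc levelWidth Ω u h s = Metric.diam (normalForm h '' {z ∈ Ω | s ≤ u z}) :=
        widthPar_eq_diam (hΩ.isBounded.subset (sep_subset _ _)) h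
    _ ≤ Metric.diam (Icc (c + s * (x - c)) (d - s * (d - x))) :=
        Metric.diam_mono hsub (Metric.isBounded_Icc _ _)
    _ = (1 - s) * widthPar Ω h := by
        rw [Real.diam_Icc hle, hwidth]
        ring

theorem exists_roof (hΩ : IsCompact Ω) (hconv : Convex ℝ Ω) (hh : h.1 ^ 2 + h.2 ^ 2 = 1)
    (hP : P ∈ interior Ω) (hQ : Q ∈ interior Ω) (hPQ : normalForm h P = normalForm h Q) :
    ∃ u, MemU Ω u ∧ IsMaxOn u Ω P ∧ u P = 1 ∧ u Q = 1 ∧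
      ∀ s ≤ 1, levelWidth Ω u h s ≤ (1 - s) * widthPar Ω h := by
  have hx := normalForm_mem_Ioo hΩ hconv hh hP
  let g := tent (sInf (normalForm h '' Ω)) (normalForm h P) (sSup (normalForm h '' Ω))
  obtain ⟨v, C, hv, hvconc, hvzero, hvpos⟩ :=
    exists_lipschitzWith_concaveOn_eq_zero_on_frontier hconv ⟨P, hP⟩
  obtain ⟨D, hD⟩ : ∃ D, LipschitzWith D g := exists_lipschitzWith_tent _ _ _
  have hr : 0 < min (v P) (v Q) := lt_min (hvpos P hP) (hvpos Q hQ)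
  let u : ℝ × ℝ → ℝ := fun z => min ((min (v P) (v Q))⁻¹ • v z) (g (normalForm h z))
  have hLip := ((lipschitzWith_smul (min (v P) (v Q))⁻¹).comp hv).min
    (hD.comp (normalForm h).lipschitz)
  have hconc : ConcaveOn ℝ Ω u := ((hvconc.smul (inv_nonneg.2 hr.le)).inf
    ((concaveOn_tent hx).comp_linearMap (normalForm h).toLinearMap)).subset (subset_univ Ω) hconv
  have hzero : ∀ z ∈ frontier Ω, u z = 0 := by
    intro z hz
    have hzΩ := mem_image_of_mem (normalForm h) (hΩ.isClosed.frontier_subset hz)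
    rw [normalForm_image_eq_Icc hΩ hconv ⟨P, interior_subset hP⟩] at hzΩ
    simp only [u, hvzero z hz, smul_zero]
    exact min_eq_left ((le_tent_iff hx).2 (by simpa using hzΩ))
  have hone : ∀ z, min (v P) (v Q) ≤ v z → normalForm h z = normalForm h P → u z = 1 := by
    intro z hz hzP
    simp only [u, g, hzP, tent_self hx]
    exact min_eq_right ((one_le_inv_mul₀ hr).2 hz)
  have huP : u P = 1 := hone P (min_le_left _ _) rfl
  refine ⟨u, memU_of_lipschitzWith hLip hconc hzero, fun z _ => ?_, huP,
    hone Q (min_le_right _ _) hPQ.symm,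
    fun s hs => levelWidth_le_of_le_tent hΩ hx (fun z _ => min_le_right _ _) hs⟩
  exact huP ▸ (min_le_right _ _).trans (tent_le_one hx)

theorem exists_le_L1N_uh_div_of_normalForm_sub_eq_zero (hΩ : IsCompact Ω) (hconv : Convex ℝ Ω)
    (hint : (interior Ω).Nonempty) (hh₁ : h₁.1 ^ 2 + h₁.2 ^ 2 = 1) (hh₂ : h₂.1 ^ 2 + h₂.2 ^ 2 = 1)
    (hP : P ∈ Ω) (hQ : Q ∈ Ω) (hPQ : normalForm h₂ (Q - P) = 0) {ε : ℝ} (hε : ε ∈ Ioc 0 1) :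
    ∃ u, MemU Ω u ∧ (∃ z ∈ Ω, u z ≠ 0) ∧
      (widthPar Ω h₁ + (1 - ε) * normalForm h₁ (Q - P)) / widthPar Ω h₂ ≤
        L1N Ω (uh h₁ u) / L1N Ω (uh h₂ u) := by
  obtain ⟨z₀, hz₀⟩ := id hint
  have hε₁ : 0 ≤ 1 - ε := sub_nonneg.2 hε.2
  have hcombo : ∀ z ∈ Ω, (1 - ε) • z + ε • z₀ ∈ interior Ω := fun z hz =>
    hconv.combo_self_interior_mem_interior hz hz₀ hε₁ hε.1 (sub_add_cancel 1 ε)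
  have hdiff : ∀ h, normalForm h (((1 - ε) • Q + ε • z₀) - ((1 - ε) • P + ε • z₀)) =
      (1 - ε) * normalForm h (Q - P) := fun h => by
    rw [add_sub_add_right_eq_sub, ← smul_sub, map_smul, smul_eq_mul]
  have hlevel := hdiff h₂
  rw [hPQ, mul_zero, map_sub, sub_eq_zero] at hlevel
  obtain ⟨u, hu, hmax, huP, huQ, hle⟩ :=
    exists_roof hΩ hconv hh₂ (hcombo P hP) (hcombo Q hQ) hlevel.symm
  have hP' := interior_subset (hcombo P hP)
  have hQ' := interior_subset (hcombo Q hQ)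
  have hne : ∃ z ∈ Ω, u z ≠ 0 := ⟨_, hP', huP.trans_ne one_ne_zero⟩
  have hnum : widthPar Ω h₁ + (1 - ε) * normalForm h₁ (Q - P) ≤ L1N Ω (uh h₁ u) := by
    have hwidth := (le_abs_self _).trans (abs_normalForm_sub_le_widthPar
      (isCompact_superlevel hΩ hu.1 1).isBounded h₁ ⟨hP', huP.ge⟩ ⟨hQ', huQ.ge⟩)
    have hL1N := mul_widthPar_add_levelWidth_le_L1N_uh hΩ hu hP' hmax hh₁
      ⟨zero_le_one, huP.ge⟩
    rw [hdiff] at hwidth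
    rw [one_mul] at hL1N
    exact (add_le_add_right hwidth _).trans hL1N
  have hden : L1N Ω (uh h₂ u) ≤ widthPar Ω h₂ :=
    L1N_uh_le_of_levelWidth_le hΩ hu hP' hmax hh₂ huP fun s hs => hle s hs.2
  exact ⟨u, hu, hne, div_le_div₀ (integral_nonneg fun _ => abs_nonneg _) hnum
    (L1N_uh_pos hΩ hint hu hne hh₂) hden⟩

theorem exists_lt_L1N_uh_div_of_orthogonal (hΩ : IsCompact Ω) (hconv : Convex ℝ Ω)
    (hint : (interior Ω).Nonempty)
    (hW : ∀ h : ℝ × ℝ, h.1 ^ 2 + h.2 ^ 2 = 1 → widthPar Ω h ≤ widthPar Ω h₁)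
    (hh₁ : h₁.1 ^ 2 + h₁.2 ^ 2 = 1) (hh₂ : h₂.1 ^ 2 + h₂.2 ^ 2 = 1)
    (horth : h₁.1 * h₂.1 + h₁.2 * h₂.2 = 0) {b : ℝ}
    (hb : b < 2 * (widthPar Ω h₁ / widthPar Ω h₂)) :
    ∃ u, MemU Ω u ∧ (∃ z ∈ Ω, u z ≠ 0) ∧ b < L1N Ω (uh h₁ u) / L1N Ω (uh h₂ u) := by
  have hwidth₁ := widthPar_pos hΩ hconv hint hh₁
  have hratio := div_pos hwidth₁ (widthPar_pos hΩ hconv hint hh₂)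
  obtain ⟨P, hP, Q, hQ, hPQ⟩ :=
    exists_normalForm_sub_eq_widthPar hΩ (hint.mono interior_subset) h₁
  have hzero : normalForm h₂ (Q - P) = 0 := by
    rw [eq_smul_of_le_normalForm hh₁ hwidth₁.le
      (sq_add_sq_le_of_forall_widthPar_le hΩ.isBounded hW hP hQ) hPQ.ge,
      normalForm_smul_normal, horth, mul_zero]
  obtain ⟨ε, hε₀, hε⟩ := exists_between (lt_min zero_lt_one (div_pos (sub_pos.2 hb) hratio))
  obtain ⟨u, hu, hne, hle⟩ := exists_le_L1N_uh_div_of_normalForm_sub_eq_zero hΩ hconv hint hh₁ hh₂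
    hP hQ hzero ⟨hε₀, hε.le.trans (min_le_left _ _)⟩
  refine ⟨u, hu, hne, lt_of_lt_of_le ?_ hle⟩
  have hgap := (lt_div_iff₀ hratio).1 (hε.trans_le (min_le_right _ _))
  calc b < (2 - ε) * (widthPar Ω h₁ / widthPar Ω h₂) := by linarith
    _ = (widthPar Ω h₁ + (1 - ε) * normalForm h₁ (Q - P)) / widthPar Ω h₂ := by
        rw [hPQ]
        ring

end Roof

/-- Theorem 5: the supremum of `‖u_{h₁}‖₁ / ‖u_{h₂}‖₁` over nonzero
`u ∈ 𝒰_Ω` and unit vectors `h₁, h₂` equals `2 wmax / wmin` iff there exist orthogonal unit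
vectors `h₁, h₂` realizing the widths `wmax` and `wmin` respectively. -/
theorem stmt_10 (Ω : Set (ℝ × ℝ)) (hΩc : IsCompact Ω) (hΩconv : Convex ℝ Ω)
    (hΩint : (interior Ω).Nonempty)
    (wmax wmin : ℝ)
    (hmax : IsGreatest {w : ℝ | ∃ h : ℝ × ℝ, h.1 ^ 2 + h.2 ^ 2 = 1 ∧ w = widthPar Ω h} wmax)
    (hmin : IsLeast {w : ℝ | ∃ h : ℝ × ℝ, h.1 ^ 2 + h.2 ^ 2 = 1 ∧ w = widthPar Ω h} wmin) :
    sSup {r : ℝ | ∃ (u : ℝ × ℝ → ℝ) (h₁ h₂ : ℝ × ℝ), MemU Ω u ∧ (∃ z ∈ Ω, u z ≠ 0) ∧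
        h₁.1 ^ 2 + h₁.2 ^ 2 = 1 ∧ h₂.1 ^ 2 + h₂.2 ^ 2 = 1 ∧
        r = L1N Ω (uh h₁ u) / L1N Ω (uh h₂ u)} = 2 * (wmax / wmin) ↔
      ∃ h₁ h₂ : ℝ × ℝ, h₁.1 ^ 2 + h₁.2 ^ 2 = 1 ∧ h₂.1 ^ 2 + h₂.2 ^ 2 = 1 ∧
        widthPar Ω h₁ = wmax ∧ widthPar Ω h₂ = wmin ∧
        h₁.1 * h₂.1 + h₁.2 * h₂.2 = 0 := by
  have hW : ∀ h : ℝ × ℝ, h.1 ^ 2 + h.2 ^ 2 = 1 → widthPar Ω h ≤ wmax :=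
    fun h hh => hmax.2 ⟨h, hh, rfl⟩
  have hw : ∀ h : ℝ × ℝ, h.1 ^ 2 + h.2 ^ 2 = 1 → wmin ≤ widthPar Ω h :=
    fun h hh => hmin.2 ⟨h, hh, rfl⟩
  have hpos : 0 < wmax ∧ 0 < wmin := by
    obtain ⟨⟨h, hh, rfl⟩, ⟨k, hk, rfl⟩⟩ := And.intro hmax.1 hmin.1
    exact ⟨widthPar_pos hΩc hΩconv hΩint hh, widthPar_pos hΩc hΩconv hΩint hk⟩
  constructor
  · intro hsup
    by_contra hnot
    obtain ⟨ρ, hρ0, hρ, hle⟩ := exists_lt_forall_L1N_uh_div_le hΩc hpos.1 hpos.2 hW hw hnot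
    refine hρ.not_ge (hsup ▸ Real.sSup_le ?_ hρ0)
    rintro r ⟨u, h₁, h₂, hu, hne, hh₁, hh₂, rfl⟩
    exact hle u h₁ h₂ hu hne hh₁ hh₂
  · rintro ⟨h₁, h₂, hh₁, hh₂, rfl, rfl, horth⟩
    have happrox := @exists_lt_L1N_uh_div_of_orthogonal Ω h₁ h₂ hΩc hΩconv hΩint hW hh₁ hh₂ horth
    refine csSup_eq_of_forall_le_of_forall_lt_exists_gt ?_ ?_ fun b hb => ?_
    · obtain ⟨u, hu, hne, -⟩ := happrox (sub_one_lt _)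
      exact ⟨_, u, h₁, h₂, hu, hne, hh₁, hh₂, rfl⟩
    · rintro r ⟨u, k₁, k₂, hu, hne, hk₁, hk₂, rfl⟩
      exact (L1N_uh_div_le hΩc hΩint hu hne hk₁ hk₂).trans <| mul_le_mul_of_nonneg_left
        (div_le_div₀ hpos.1.le (hW k₁ hk₁) hpos.2 (hw k₂ hk₂)) zero_le_two
    · obtain ⟨u, hu, hne, hlt⟩ := happrox hb
      exact ⟨_, ⟨u, h₁, h₂, hu, hne, hh₁, hh₂, rfl⟩, hlt⟩
end

section
/- Let Ω = {(x, y) ∈ ℝ² : x² + y² ≤ 1} be the closed unit disc. Then sup{ ‖u_x‖₁ / ‖u_y‖₁ : u ∈ 𝒰_Ω, u ≢ 0 } = 2, and the supremum is not attained by any u ∈ 𝒰_Ω. -/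
open Set MeasureTheory
open scoped ENNReal

/-!
For `u ∈ 𝒰_Ω` each slice `u (x, ·)` is concave and vanishes at the ends of the slice of `Ω`, so it
rises to its maximum and falls back; hence `∫ |u_y (x, ·)| = 2 max u (x, ·)`, and `‖u_y‖₁` is twice
the integral of the marginal maximum `M x = max u (x, ·)`.

Let `H` be the maximum of `u` and suppose that `Ω` projects onto `[a, b]` and `[c, d]`. The function
`M` is concave, nonnegative and attains `H`, so `∫ M ≥ (b - a) H / 2`. The corresponding maximum for
`u_x` is at most `H` everywhere and close to `0` at the ends of `[c, d]`, so its integral is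
strictly less than `(d - c) H`. Comparing, `(b - a) ‖u_x‖₁ < 2 (d - c) ‖u_y‖₁`, which for the disc
is the strict bound by `2`. Tents `1 - |x|`, cut off ever more steeply near the circle, nearly
attain equality in both estimates.
-/

section OneDimensional

variable {f : ℝ → ℝ} {a b m : ℝ} {s : Set ℝ}

theorem monotoneOn_inter_Iic_of_concaveOn (hf : ConcaveOn ℝ s f) (hm : m ∈ s)
    (hmax : IsMaxOn f s m) : MonotoneOn f (s ∩ Iic m) := fun x hx y hy hxy => by
  have h := hf.min_le_of_mem_Icc hx.1 hm ⟨hxy, hy.2⟩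
  rwa [min_eq_left (isMaxOn_iff.1 hmax x hx.1)] at h

theorem antitoneOn_inter_Ici_of_concaveOn (hf : ConcaveOn ℝ s f) (hm : m ∈ s)
    (hmax : IsMaxOn f s m) : AntitoneOn f (s ∩ Ici m) := fun x hx y hy hxy => by
  have h := hf.min_le_of_mem_Icc hm hy.1 ⟨hx.2, hxy⟩
  rwa [min_eq_right (isMaxOn_iff.1 hmax y hy.1)] at h

theorem integral_abs_deriv_of_monotoneOn (hab : a ≤ b) (hcont : ContinuousOn f (Icc a b))
    (hmono : MonotoneOn f (Icc a b))
    (hright : ∀ x ∈ Ioo a b, DifferentiableWithinAt ℝ f (Ioi x) x) :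
    ∫ x in a..b, |deriv f x| = f b - f a := by
  -- The fundamental theorem of calculus fails for derivatives existing only almost everywhere,
  -- so it is applied to the right derivative.
  set r : ℝ → ℝ := fun x => derivWithin f (Ioi x) x
  have hr : ∀ x ∈ Ioo a b, HasDerivWithinAt f (r x) (Ioi x) x := fun x hx =>
    (hright x hx).hasDerivWithinAt
  have hr_nonneg : ∀ x ∈ Ioo a b, 0 ≤ r x := fun x hx => by
    have hsub : Ico x b ⊆ Icc a b := fun t ht => ⟨hx.1.le.trans ht.1, ht.2.le⟩
    have hreq : r x = derivWithin f (Ico x b) x := by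
      rw [← Ici_inter_Iio, derivWithin_inter (Iio_mem_nhds hx.2), ← derivWithin_Ioi_eq_Ici]
    exact hreq ▸ (hmono.mono hsub).derivWithin_nonneg
  have hderiv : ∀ᵐ x, x ∈ Ioo a b → r x = |deriv f x| := by
    filter_upwards [hmono.ae_differentiableWithinAt_of_mem] with x hx hxab
    have hdiff : DifferentiableAt ℝ f x :=
      (hx (Ioo_subset_Icc_self hxab)).differentiableAt (Icc_mem_nhds hxab.1 hxab.2)
    have hreq : r x = deriv f x := hdiff.derivWithin (uniqueDiffWithinAt_Ioi x)
    rw [← hreq, abs_of_nonneg (hr_nonneg x hxab)]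
  have hint : IntervalIntegrable r volume a b :=
    (intervalIntegrable_iff_integrableOn_Ioc_of_le hab).2
      (intervalIntegral.integrableOn_deriv_right_of_nonneg hcont hr hr_nonneg)
  rw [← intervalIntegral.integral_eq_sub_of_hasDeriv_right_of_le hab hcont hr hint,
    intervalIntegral.integral_of_le hab, intervalIntegral.integral_of_le hab,
    integral_Ioc_eq_integral_Ioo, integral_Ioc_eq_integral_Ioo]
  exact (setIntegral_congr_ae measurableSet_Ioo hderiv).symm

theorem integral_abs_deriv_of_antitoneOn (hab : a ≤ b) (hcont : ContinuousOn f (Icc a b))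
    (hanti : AntitoneOn f (Icc a b))
    (hright : ∀ x ∈ Ioo a b, DifferentiableWithinAt ℝ f (Ioi x) x) :
    ∫ x in a..b, |deriv f x| = f a - f b := by
  have h := integral_abs_deriv_of_monotoneOn (f := -f) hab hcont.neg hanti.neg
    fun x hx => (hright x hx).neg
  simpa [deriv.neg', add_comm, sub_eq_add_neg] using h

theorem integral_abs_deriv_of_concaveOn (hf : ConcaveOn ℝ (Icc a b) f)
    (hcont : ContinuousOn f (Icc a b)) (hm : m ∈ Icc a b) (hmax : IsMaxOn f (Icc a b) m) :
    ∫ x in a..b, |deriv f x| = 2 * f m - f a - f b := by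
  have hright : ∀ x ∈ Ioo a b, DifferentiableWithinAt ℝ f (Ioi x) x := fun x hx => by
    simpa using (hf.neg.differentiableWithinAt_Ioi_of_mem_interior (by rwa [interior_Icc])).neg
  have hleft : MonotoneOn f (Icc a m) :=
    (monotoneOn_inter_Iic_of_concaveOn hf hm hmax).mono
      (subset_inter (Icc_subset_Icc_right hm.2) Icc_subset_Iic_self)
  have hright' : AntitoneOn f (Icc m b) :=
    (antitoneOn_inter_Ici_of_concaveOn hf hm hmax).mono
      (subset_inter (Icc_subset_Icc_left hm.1) Icc_subset_Ici_self)
  have hint_left : IntervalIntegrable (fun x => |deriv f x|) volume a m :=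
    (MonotoneOn.intervalIntegrable_deriv (by rwa [uIcc_of_le hm.1])).abs
  have hint_right : IntervalIntegrable (fun x => |deriv f x|) volume m b := by
    have h := (MonotoneOn.intervalIntegrable_deriv (f := -f)
      (by rw [uIcc_of_le hm.2]; exact hright'.neg)).abs
    simpa [deriv.neg'] using h
  rw [← intervalIntegral.integral_add_adjacent_intervals hint_left hint_right,
    integral_abs_deriv_of_monotoneOn hm.1 (hcont.mono (Icc_subset_Icc_right hm.2)) hleft
      fun x hx => hright x (Ioo_subset_Ioo_right hm.2 hx),
    integral_abs_deriv_of_antitoneOn hm.2 (hcont.mono (Icc_subset_Icc_left hm.1)) hright'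
      fun x hx => hright x (Ioo_subset_Ioo_left hm.1 hx)]
  ring

theorem exists_eq_Icc_of_convex_of_isCompact (hconv : Convex ℝ s) (hcomp : IsCompact s)
    (hne : s.Nonempty) : ∃ c d, c ≤ d ∧ s = Icc c d := by
  have h := eq_Icc_of_connected_compact ⟨hne, hconv.isPreconnected⟩ hcomp
  exact ⟨_, _, nonempty_Icc.1 (h ▸ hne), h⟩

theorem nonneg_of_concaveOn_of_frontier_eq_zero (hf : ConcaveOn ℝ s f) (hs : IsCompact s)
    (hzero : ∀ x ∈ frontier s, f x = 0) {x : ℝ} (hx : x ∈ s) : 0 ≤ f x := by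
  obtain ⟨c, d, hcd, rfl⟩ := exists_eq_Icc_of_convex_of_isCompact hf.1 hs ⟨x, hx⟩
  have h := hf.min_le_of_mem_Icc (left_mem_Icc.2 hcd) (right_mem_Icc.2 hcd) hx
  rwa [hzero c (by simp [frontier_Icc hcd]), hzero d (by simp [frontier_Icc hcd]), min_self] at h

theorem setIntegral_abs_deriv_of_concaveOn (hf : ConcaveOn ℝ s f) (hs : IsCompact s)
    (hcont : ContinuousOn f s) (hzero : ∀ x ∈ frontier s, f x = 0) :
    ∫ x in s, |deriv f x| = 2 * sSup (f '' s) := by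
  rcases s.eq_empty_or_nonempty with rfl | hne
  · simp
  obtain ⟨m, hm, hsup, hmax⟩ := hs.exists_sSup_image_eq_and_ge hne hcont
  obtain ⟨c, d, hcd, rfl⟩ := exists_eq_Icc_of_convex_of_isCompact hf.1 hs hne
  rw [integral_Icc_eq_integral_Ioc, ← intervalIntegral.integral_of_le hcd,
    integral_abs_deriv_of_concaveOn hf hcont hm hmax, hsup,
    hzero c (by simp [frontier_Icc hcd]), hzero d (by simp [frontier_Icc hcd])]
  ring

theorem trapezoid_le_integral_of_concaveOn (hab : a ≤ b) (hf : ConcaveOn ℝ (Icc a b) f)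
    (hint : IntervalIntegrable f volume a b) :
    (b - a) * ((f a + f b) / 2) ≤ ∫ x in a..b, f x := by
  rcases hab.eq_or_lt with rfl | hlt
  · simp
  have hba : b - a ≠ 0 := (sub_pos.2 hlt).ne'
  have hchord : ∀ x ∈ Icc a b, (f b - f a) / (b - a) * (x - a) + f a ≤ f x := fun x hx => by
    have h := hf.2 (left_mem_Icc.2 hab) (right_mem_Icc.2 hab)
      (div_nonneg (sub_nonneg.2 hx.2) (sub_nonneg.2 hab))
      (div_nonneg (sub_nonneg.2 hx.1) (sub_nonneg.2 hab)) (by field_simp; ring)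
    have hx : (b - x) / (b - a) * a + (x - a) / (b - a) * b = x := by field_simp; ring
    simp only [smul_eq_mul, hx] at h
    refine le_of_eq_of_le ?_ h
    field_simp
    ring
  calc (b - a) * ((f a + f b) / 2)
      = ∫ x in a..b, ((f b - f a) / (b - a) * (x - a) + f a) := by
        rw [intervalIntegral.integral_add (Continuous.intervalIntegrable (by fun_prop) _ _)
            (by simp), intervalIntegral.integral_const_mul,
          intervalIntegral.integral_sub (by simp) (by simp)]
        simp only [integral_id, intervalIntegral.integral_const, smul_eq_mul]
        field_simp
        ring
    _ ≤ ∫ x in a..b, f x := intervalIntegral.integral_mono_on hab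
        (Continuous.intervalIntegrable (by fun_prop) _ _) hint hchord

theorem mul_le_integral_of_concaveOn (hf : ConcaveOn ℝ (Icc a b) f)
    (hint : IntervalIntegrable f volume a b) (ha : 0 ≤ f a) (hb : 0 ≤ f b) (hm : m ∈ Icc a b) :
    (b - a) * (f m / 2) ≤ ∫ x in a..b, f x := by
  have hm' : m ∈ uIcc a b := Icc_subset_uIcc hm
  have hint_left := hint.mono_set (uIcc_subset_uIcc left_mem_uIcc hm')
  have hint_right := hint.mono_set (uIcc_subset_uIcc hm' right_mem_uIcc)
  have hleft := trapezoid_le_integral_of_concaveOn hm.1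
    (hf.subset (Icc_subset_Icc_right hm.2) (convex_Icc a m)) hint_left
  have hright := trapezoid_le_integral_of_concaveOn hm.2
    (hf.subset (Icc_subset_Icc_left hm.1) (convex_Icc m b)) hint_right
  rw [← intervalIntegral.integral_add_adjacent_intervals hint_left hint_right]
  nlinarith [mul_nonneg (sub_nonneg.2 hm.1) ha, mul_nonneg (sub_nonneg.2 hm.2) hb]

theorem integral_abs_neg_self (ha : 0 ≤ a) : ∫ x in -a..a, |x| = a ^ 2 := by
  have hint : ∀ b c : ℝ, IntervalIntegrable (fun x => |x|) volume b c := fun b c =>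
    continuous_abs.intervalIntegrable b c
  have hright : ∫ x in 0..a, |x| = a ^ 2 / 2 := by
    rw [intervalIntegral.integral_congr (g := fun x => x) fun x hx =>
      abs_of_nonneg (uIcc_of_le ha ▸ hx).1]
    simp
  have hleft : ∫ x in -a..0, |x| = ∫ x in 0..a, |x| := by
    simpa using intervalIntegral.integral_comp_neg (a := -a) (b := 0) fun x => |x|
  rw [← intervalIntegral.integral_add_adjacent_intervals (hint _ 0) (hint 0 _), hleft, hright]
  ring

end OneDimensional

section Rademacher

variable {E F : Type*} [NormedAddCommGroup E] [NormedSpace ℝ E] [FiniteDimensional ℝ E]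
  [MeasurableSpace E] [BorelSpace E] {μ : Measure E} [μ.IsAddHaarMeasure]
  [NormedAddCommGroup F] [NormedSpace ℝ F] [FiniteDimensional ℝ F]

theorem ae_differentiableAt_of_locallyLipschitzOn {s : Set E} {f : E → F} (hs : IsOpen s)
    (hf : LocallyLipschitzOn s f) : ∀ᵐ x ∂μ, x ∈ s → DifferentiableAt ℝ f x := by
  have hnull : μ (s ∩ {x | ¬ DifferentiableAt ℝ f x}) = 0 := by
    refine measure_null_of_locally_null _ fun x hx => ?_
    obtain ⟨K, t, ht, hK⟩ := hf hx.1
    rw [hs.nhdsWithin_eq hx.1] at ht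
    refine ⟨interior t ∩ (s ∩ {x | ¬ DifferentiableAt ℝ f x}),
      Filter.inter_mem (nhdsWithin_le_nhds (interior_mem_nhds.2 ht)) self_mem_nhdsWithin, ?_⟩
    refine measure_mono_null ?_ ((hK.mono interior_subset).ae_differentiableWithinAt_of_mem)
    rintro y ⟨hyt, -, hy⟩ hdiff
    exact hy ((hdiff hyt).differentiableAt (isOpen_interior.mem_nhds hyt))
  filter_upwards [measure_eq_zero_iff_ae_notMem.1 hnull] with x hx hxs
  exact not_not.1 fun hndiff => hx ⟨hxs, hndiff⟩

theorem ae_differentiableAt_of_concaveOn {s : Set E} {f : E → ℝ} (hf : ConcaveOn ℝ s f) :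
    ∀ᵐ x ∂μ, x ∈ interior s → DifferentiableAt ℝ f x :=
  ae_differentiableAt_of_locallyLipschitzOn isOpen_interior hf.locallyLipschitzOn_interior

theorem interior_ae_eq_of_convex {s : Set E} (hs : Convex ℝ s) : interior s =ᵐ[μ] s :=
  interior_ae_eq_of_null_frontier (hs.addHaar_frontier μ)

end Rademacher

section Slices

variable {α β : Type*}

theorem fst_image_preimage_swap (s : Set (α × β)) :
    Prod.fst '' (Prod.swap ⁻¹' s) = Prod.snd '' s := by
  rw [← image_swap_eq_preimage_swap, image_image]
  rfl

section Topology

variable [TopologicalSpace α] [TopologicalSpace β] {s : Set (α × β)}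

theorem isCompact_preimage_prodMk [T2Space α] [T2Space β] (hs : IsCompact s) (x : α) :
    IsCompact (Prod.mk x ⁻¹' s) :=
  (hs.image continuous_snd).of_isClosed_subset (hs.isClosed.preimage (by fun_prop))
    fun y hy => ⟨(x, y), hy, rfl⟩

theorem mk_mem_frontier_of_mem_frontier_preimage {x : α} {y : β}
    (hy : y ∈ frontier (Prod.mk x ⁻¹' s)) : (x, y) ∈ frontier s :=
  (Continuous.prodMk_right x).frontier_preimage_subset s hy

theorem mem_frontier_of_fst_mem_frontier {z : α × β} (hz : z ∈ s)
    (hz' : z.1 ∈ frontier (Prod.fst '' s)) : z ∈ frontier s :=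
  ⟨subset_closure hz, fun hint =>
    hz'.2 (isOpenMap_fst.image_interior_subset s (mem_image_of_mem _ hint))⟩

end Topology

theorem concaveOn_preimage_prodMk {E F : Type*} [AddCommGroup E] [Module ℝ E] [AddCommGroup F]
    [Module ℝ F] {s : Set (E × F)} {u : E × F → ℝ} (hu : ConcaveOn ℝ s u) (x : E) :
    ConcaveOn ℝ (Prod.mk x ⁻¹' s) fun y => u (x, y) :=
  hu.comp_affineMap ((AffineMap.const ℝ F x).prod (AffineMap.id ℝ F))

section Fubini

variable [MeasurableSpace α] [MeasurableSpace β] {μ : Measure α} {ν : Measure β}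
  {G : Type*} [NormedAddCommGroup G] [NormedSpace ℝ G] {s : Set (α × β)}
  {f : α × β → G}

theorem integral_indicator_prodMk (hs : MeasurableSet s) (x : α) :
    ∫ y, s.indicator f (x, y) ∂ν = ∫ y in Prod.mk x ⁻¹' s, f (x, y) ∂ν := by
  rw [← integral_indicator (measurable_prodMk_left hs)]
  rfl

theorem integrable_setIntegral_slice [SFinite ν] (hs : MeasurableSet s)
    (hf : IntegrableOn f s (μ.prod ν)) :
    Integrable (fun x => ∫ y in Prod.mk x ⁻¹' s, f (x, y) ∂ν) μ := by
  simpa only [integral_indicator_prodMk hs] using (hf.integrable_indicator hs).integral_prod_left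

theorem setIntegral_eq_integral_setIntegral_slice [SFinite μ] [SFinite ν] (hs : MeasurableSet s)
    (hf : IntegrableOn f s (μ.prod ν)) :
    ∫ z in s, f z ∂μ.prod ν = ∫ x, ∫ y in Prod.mk x ⁻¹' s, f (x, y) ∂ν ∂μ := by
  rw [← integral_indicator hs, integral_prod _ (hf.integrable_indicator hs)]
  simp only [integral_indicator_prodMk hs]

end Fubini

/-- The marginal supremum `x ↦ sup {u (x, y) | (x, y) ∈ s}` of `u` over the vertical slices of
`s`. Over an empty slice it takes the junk value `sSup ∅ = 0`, so that its integral over all of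
`α` is the one over the projection of `s`. -/
noncomputable def sliceSup (s : Set (α × β)) (u : α × β → ℝ) (x : α) : ℝ :=
  sSup ((fun y => u (x, y)) '' (Prod.mk x ⁻¹' s))

theorem sliceSup_of_notMem {s : Set (α × β)} {u : α × β → ℝ} {x : α} (hx : x ∉ Prod.fst '' s) :
    sliceSup s u x = 0 := by
  have hempty : Prod.mk x ⁻¹' s = ∅ := eq_empty_of_forall_notMem fun y hy => hx ⟨(x, y), hy, rfl⟩
  rw [sliceSup, hempty, image_empty, Real.sSup_empty]

theorem sliceSup_nonneg {s : Set (α × β)} {u : α × β → ℝ} (hu : ∀ z ∈ s, 0 ≤ u z) (x : α) :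
    0 ≤ sliceSup s u x :=
  Real.sSup_nonneg (by rintro _ ⟨y, hy, rfl⟩; exact hu _ hy)

section SliceSupTopology

variable [TopologicalSpace α] [TopologicalSpace β] [T2Space α] [T2Space β] {s : Set (α × β)}
  {u : α × β → ℝ} {x : α} {H : ℝ}

theorem le_sliceSup (hs : IsCompact s) (hu : ContinuousOn u s) {z : α × β} (hz : z ∈ s) :
    u z ≤ sliceSup s u z.1 :=
  le_csSup ((isCompact_preimage_prodMk hs z.1).bddAbove_image
    (hu.comp (by fun_prop) (mapsTo_preimage _ _))) (mem_image_of_mem (fun y => u (z.1, y)) hz)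

theorem exists_mem_eq_sliceSup (hs : IsCompact s) (hu : ContinuousOn u s)
    (hx : x ∈ Prod.fst '' s) : ∃ y, (x, y) ∈ s ∧ u (x, y) = sliceSup s u x := by
  obtain ⟨⟨_, y⟩, hy, rfl⟩ := hx
  obtain ⟨y', hy', hsup⟩ := (isCompact_preimage_prodMk hs _).exists_sSup_image_eq ⟨y, hy⟩
    (hu.comp (by fun_prop) (mapsTo_preimage _ _))
  exact ⟨y', hy', hsup.symm⟩

theorem sliceSup_eq_zero_of_mem_frontier (hs : IsCompact s) (hu : ContinuousOn u s)
    (hzero : ∀ z ∈ frontier s, u z = 0) (hx : x ∈ frontier (Prod.fst '' s)) :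
    sliceSup s u x = 0 := by
  obtain ⟨y, hy, hsup⟩ :=
    exists_mem_eq_sliceSup hs hu ((hs.image continuous_fst).isClosed.frontier_subset hx)
  rw [← hsup, hzero _ (mem_frontier_of_fst_mem_frontier hy hx)]

theorem isOpen_setOf_sliceSup_lt (hs : IsCompact s) (hu : ContinuousOn u s) (hH : 0 < H) :
    IsOpen {x | sliceSup s u x < H} := by
  have hcompact : IsCompact (s ∩ u ⁻¹' Ici H) := hs.of_isClosed_subset
    (hu.preimage_isClosed_of_isClosed hs.isClosed isClosed_Ici) inter_subset_left
  have hcompl : {x | sliceSup s u x < H} = (Prod.fst '' (s ∩ u ⁻¹' Ici H))ᶜ := by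
    ext x
    refine ⟨?_, fun hx => ?_⟩
    · rintro hlt ⟨z, ⟨hz, hHz⟩, rfl⟩
      exact (hlt.trans_le hHz).not_ge (le_sliceSup hs hu hz)
    · by_cases hxs : x ∈ Prod.fst '' s
      · obtain ⟨y, hy, hsup⟩ := exists_mem_eq_sliceSup hs hu hxs
        exact not_le.1 fun hle => hx ⟨(x, y), ⟨hy, hle.trans_eq hsup.symm⟩, rfl⟩
      · exact (sliceSup_of_notMem hxs).trans_lt hH
  exact hcompl ▸ (hcompact.image continuous_fst).isClosed.isOpen_compl

end SliceSupTopology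

theorem concaveOn_sliceSup {E F : Type*} [TopologicalSpace E] [T2Space E] [AddCommGroup E]
    [Module ℝ E] [TopologicalSpace F] [T2Space F] [AddCommGroup F] [Module ℝ F]
    {s : Set (E × F)} {u : E × F → ℝ} (hs : IsCompact s) (hcont : ContinuousOn u s)
    (hu : ConcaveOn ℝ s u) : ConcaveOn ℝ (Prod.fst '' s) (sliceSup s u) := by
  refine ⟨hu.1.linear_image (LinearMap.fst ℝ E F), fun x hx x' hx' t t' ht ht' htt' => ?_⟩
  obtain ⟨y, hy, hsup⟩ := exists_mem_eq_sliceSup hs hcont hx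
  obtain ⟨y', hy', hsup'⟩ := exists_mem_eq_sliceSup hs hcont hx'
  rw [← hsup, ← hsup']
  exact (hu.2 hy hy' ht ht' htt').trans (le_sliceSup hs hcont (hu.1 hy hy' ht ht' htt'))

end Slices

theorem deriv_slice_eq_uy {u : ℝ × ℝ → ℝ} {x y : ℝ} (hu : DifferentiableAt ℝ u (x, y)) :
    deriv (fun t => u (x, t)) y = uy u (x, y) := by
  have hmk : HasDerivAt (fun t : ℝ => (x, t)) ((0 : ℝ), (1 : ℝ)) y :=
    (hasDerivAt_const y x).prodMk (hasDerivAt_id y)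
  exact (hu.hasFDerivAt.comp_hasDerivAt y hmk).deriv

theorem L1N_uy_comp_swap (Ω : Set (ℝ × ℝ)) (u : ℝ × ℝ → ℝ) :
    L1N (Prod.swap ⁻¹' Ω) (uy (u ∘ Prod.swap)) = L1N Ω (ux u) := by
  have huy : ∀ z, uy (u ∘ Prod.swap) z = ux u z.swap := fun z => by
    have h := (ContinuousLinearEquiv.prodComm ℝ ℝ ℝ).comp_right_fderiv (f := u) (x := z)
    rw [uy, ux]
    exact congrArg (· (0, 1)) h
  have hswap : MeasurePreserving (Prod.swap : ℝ × ℝ → ℝ × ℝ) volume volume :=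
    Measure.measurePreserving_swap
  simp only [L1N, huy]
  exact hswap.setIntegral_preimage_emb MeasurableEquiv.prodComm.measurableEmbedding
    (fun z => |ux u z|) Ω

namespace MemU

variable {Ω : Set (ℝ × ℝ)} {u : ℝ × ℝ → ℝ} {a b c d H : ℝ} {z : ℝ × ℝ}

theorem continuousOn (hu : MemU Ω u) : ContinuousOn u Ω := hu.1

theorem concaveOn (hu : MemU Ω u) : ConcaveOn ℝ Ω u := hu.2.1

theorem eq_zero_of_mem_frontier (hu : MemU Ω u) (hz : z ∈ frontier Ω) : u z = 0 := hu.2.2.1 z hz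

theorem nonneg_s11 (hΩ : IsCompact Ω) (hu : MemU Ω u) (hz : z ∈ Ω) : 0 ≤ u z :=
  nonneg_of_concaveOn_of_frontier_eq_zero (concaveOn_preimage_prodMk hu.concaveOn z.1)
    (isCompact_preimage_prodMk hΩ z.1)
    (fun _ hy => hu.eq_zero_of_mem_frontier (mk_mem_frontier_of_mem_frontier_preimage hy)) hz

theorem ae_differentiableAt (hu : MemU Ω u) : ∀ᵐ z, z ∈ Ω → DifferentiableAt ℝ u z := by
  filter_upwards [ae_differentiableAt_of_concaveOn hu.concaveOn,
    (interior_ae_eq_of_convex (μ := volume) hu.concaveOn.1).mem_iff] with z hdiff hint hz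
  exact hdiff (hint.2 hz)

theorem integrableOn_abs_uy (hΩ : IsCompact Ω) (hu : MemU Ω u) :
    IntegrableOn (fun z => |uy u z|) Ω := by
  obtain ⟨-, hconc, -, C, hC⟩ := hu
  have hmeas : Measurable fun z => |uy u z| := (measurable_fderiv_apply_const ℝ u (0, 1)).abs
  refine Measure.integrableOn_of_bounded (M := C) hΩ.measure_lt_top.ne
    hmeas.aestronglyMeasurable ?_
  rw [← Measure.restrict_congr_set (interior_ae_eq_of_convex hconc.1),
    ae_restrict_iff' isOpen_interior.measurableSet]
  filter_upwards [ae_differentiableAt_of_concaveOn hconc] with z hdiff hz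
  calc ‖|uy u z|‖ = ‖fderiv ℝ u z (0, 1)‖ := by simp [uy]
    _ ≤ ‖fderiv ℝ u z‖ := by simpa using (fderiv ℝ u z).le_opNorm (0, 1)
    _ ≤ C := hC z hz _ (hdiff hz).hasFDerivAt

theorem ae_setIntegral_slice_eq (hΩ : IsCompact Ω) (hu : MemU Ω u) :
    ∀ᵐ x, ∫ y in Prod.mk x ⁻¹' Ω, |uy u (x, y)| = 2 * sliceSup Ω u x := by
  have hdiff := hu.ae_differentiableAt
  rw [Measure.volume_eq_prod] at hdiff
  filter_upwards [Measure.ae_ae_of_ae_prod hdiff] with x hx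
  calc ∫ y in Prod.mk x ⁻¹' Ω, |uy u (x, y)|
      = ∫ y in Prod.mk x ⁻¹' Ω, |deriv (fun t => u (x, t)) y| := by
        refine setIntegral_congr_ae (measurable_prodMk_left hΩ.measurableSet) ?_
        filter_upwards [hx] with y hy hyΩ
        rw [deriv_slice_eq_uy (hy hyΩ)]
    _ = 2 * sliceSup Ω u x :=
        setIntegral_abs_deriv_of_concaveOn (concaveOn_preimage_prodMk hu.concaveOn x)
          (isCompact_preimage_prodMk hΩ x)
          (hu.continuousOn.comp (by fun_prop) (mapsTo_preimage _ _))
          fun _ hy => hu.eq_zero_of_mem_frontier (mk_mem_frontier_of_mem_frontier_preimage hy)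

theorem integrable_sliceSup (hΩ : IsCompact Ω) (hu : MemU Ω u) : Integrable (sliceSup Ω u) := by
  have h := integrable_setIntegral_slice (μ := volume) (ν := volume) hΩ.measurableSet
    (hu.integrableOn_abs_uy hΩ)
  refine ((h.congr (hu.ae_setIntegral_slice_eq hΩ)).const_mul (1 / 2)).congr ?_
  exact Filter.Eventually.of_forall fun x => by ring

theorem L1N_uy_eq (hΩ : IsCompact Ω) (hu : MemU Ω u) :
    L1N Ω (uy u) = 2 * ∫ x, sliceSup Ω u x := by
  rw [L1N, Measure.volume_eq_prod, setIntegral_eq_integral_setIntegral_slice hΩ.measurableSet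
    (hu.integrableOn_abs_uy hΩ), integral_congr_ae (hu.ae_setIntegral_slice_eq hΩ),
    integral_const_mul]

theorem L1N_uy_eq_intervalIntegral (hΩ : IsCompact Ω) (hu : MemU Ω u) (hab : a ≤ b)
    (hproj : Prod.fst '' Ω = Icc a b) : L1N Ω (uy u) = 2 * ∫ x in a..b, sliceSup Ω u x := by
  rw [hu.L1N_uy_eq hΩ, intervalIntegral.integral_of_le hab, ← integral_Icc_eq_integral_Ioc,
    setIntegral_eq_integral_of_forall_compl_eq_zero fun x hx => sliceSup_of_notMem (hproj ▸ hx)]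

theorem mul_le_L1N_uy (hΩ : IsCompact Ω) (hu : MemU Ω u) (hproj : Prod.fst '' Ω = Icc a b)
    (hz : z ∈ Ω) : (b - a) * u z ≤ L1N Ω (uy u) := by
  have hzab : z.1 ∈ Icc a b := hproj ▸ mem_image_of_mem _ hz
  have hab : a ≤ b := hzab.1.trans hzab.2
  have hnonneg := sliceSup_nonneg fun z hz => hu.nonneg_s11 hΩ hz
  have h := mul_le_integral_of_concaveOn
    (hproj ▸ concaveOn_sliceSup hΩ hu.continuousOn hu.concaveOn)
    (hu.integrable_sliceSup hΩ).intervalIntegrable (hnonneg a) (hnonneg b) hzab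
  have hle := mul_le_mul_of_nonneg_left (le_sliceSup hΩ hu.continuousOn hz) (sub_nonneg.2 hab)
  rw [hu.L1N_uy_eq_intervalIntegral hΩ hab hproj]
  linarith

theorem L1N_uy_lt (hΩ : IsCompact Ω) (hu : MemU Ω u) (hproj : Prod.fst '' Ω = Icc a b)
    (hab : a < b) (hH : 0 < H) (hle : ∀ z ∈ Ω, u z ≤ H) : L1N Ω (uy u) < 2 * (b - a) * H := by
  have hsup_le : ∀ x, sliceSup Ω u x ≤ H := fun x =>
    Real.sSup_le (by rintro _ ⟨y, hy, rfl⟩; exact hle _ hy) hH.le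
  have hopen : IsOpen {x | sliceSup Ω u x < H} := isOpen_setOf_sliceSup_lt hΩ hu.continuousOn hH
  have ha : sliceSup Ω u a < H :=
    (sliceSup_eq_zero_of_mem_frontier hΩ hu.continuousOn (fun _ => hu.eq_zero_of_mem_frontier)
      (by simp [hproj, frontier_Icc hab.le])).trans_lt hH
  have hne : ({x | sliceSup Ω u x < H} ∩ Ioo a b).Nonempty :=
    mem_closure_iff.1 (closure_Ioo hab.ne ▸ left_mem_Icc.2 hab.le) _ hopen ha
  have hlt : ∫ x in a..b, sliceSup Ω u x < ∫ _ in a..b, H := by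
    refine intervalIntegral.integral_lt_integral_of_ae_le_of_measure_setOfPred_lt_ne_zero hab.le
      (hu.integrable_sliceSup hΩ).intervalIntegrable (by simp)
      (Filter.Eventually.of_forall hsup_le) ?_
    rw [Measure.restrict_apply hopen.measurableSet]
    exact (((hopen.inter isOpen_Ioo).measure_pos volume hne).trans_le
      (measure_mono (inter_subset_inter_right _ Ioo_subset_Ioc_self))).ne'
  rw [intervalIntegral.integral_const, smul_eq_mul] at hlt
  rw [hu.L1N_uy_eq_intervalIntegral hΩ hab.le hproj]
  linarith

theorem comp_linearIsometryEquiv (hu : MemU Ω u) (e : (ℝ × ℝ) ≃ₗᵢ[ℝ] (ℝ × ℝ)) :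
    MemU (e ⁻¹' Ω) (u ∘ e) := by
  obtain ⟨hcont, hconc, hzero, C, hC⟩ := hu
  refine ⟨hcont.comp e.continuous.continuousOn (mapsTo_preimage _ _),
    hconc.comp_linearMap e.toLinearEquiv.toLinearMap, fun z hz => hzero _ ?_, C,
    fun z hz g hg => ?_⟩
  · exact (e.toHomeomorph.preimage_frontier Ω).ge hz
  · have hz' : e z ∈ interior Ω := (e.toHomeomorph.preimage_interior Ω).ge hz
    have hg' := e.toContinuousLinearEquiv.comp_right_hasFDerivAt_iff'.1 hg
    rw [← g.opNorm_comp_linearIsometryEquiv e.symm]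
    exact hC _ hz' _ hg'

theorem comp_swap (hu : MemU Ω u) : MemU (Prod.swap ⁻¹' Ω) (u ∘ Prod.swap) :=
  hu.comp_linearIsometryEquiv (LinearIsometryEquiv.prodComm ℝ ℝ ℝ)

theorem L1N_ux_lt (hΩ : IsCompact Ω) (hu : MemU Ω u) (hproj : Prod.snd '' Ω = Icc c d)
    (hcd : c < d) (hH : 0 < H) (hle : ∀ z ∈ Ω, u z ≤ H) : L1N Ω (ux u) < 2 * (d - c) * H := by
  rw [← L1N_uy_comp_swap]
  refine hu.comp_swap.L1N_uy_lt ?_ ?_ hcd hH fun z hz => hle _ hz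
  · exact (Homeomorph.prodComm ℝ ℝ).isCompact_preimage.2 hΩ
  · rw [fst_image_preimage_swap, hproj]

theorem exists_mem_interior_isMaxOn (hΩ : IsCompact Ω) (hu : MemU Ω u) (hne : ∃ z ∈ Ω, u z ≠ 0) :
    ∃ z ∈ interior Ω, 0 < u z ∧ IsMaxOn u Ω z := by
  obtain ⟨w, hw, hw0⟩ := hne
  obtain ⟨z, hz, hmax⟩ := hΩ.exists_isMaxOn ⟨w, hw⟩ hu.continuousOn
  have hpos : 0 < u z := ((hu.nonneg_s11 hΩ hw).lt_of_ne' hw0).trans_le (hmax hw)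
  refine ⟨z, by_contra fun hint => ?_, hpos, hmax⟩
  exact hpos.ne' (hu.eq_zero_of_mem_frontier ⟨subset_closure hz, hint⟩)

theorem L1N_uy_pos (hΩ : IsCompact Ω) (hu : MemU Ω u) (hne : ∃ z ∈ Ω, u z ≠ 0) :
    0 < L1N Ω (uy u) := by
  obtain ⟨z, hz, hpos, -⟩ := hu.exists_mem_interior_isMaxOn hΩ hne
  have hzΩ := interior_subset hz
  obtain ⟨a, b, -, hproj⟩ := exists_eq_Icc_of_convex_of_isCompact
    (hu.concaveOn.1.linear_image (LinearMap.fst ℝ ℝ ℝ)) (hΩ.image continuous_fst) ⟨_, z, hzΩ, rfl⟩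
  have hzab : z.1 ∈ interior (Icc a b) :=
    hproj ▸ isOpenMap_fst.image_interior_subset Ω (mem_image_of_mem _ hz)
  rw [interior_Icc] at hzab
  exact (mul_pos (sub_pos.2 (hzab.1.trans hzab.2)) hpos).trans_le (hu.mul_le_L1N_uy hΩ hproj hzΩ)

theorem mul_L1N_ux_lt (hΩ : IsCompact Ω) (hu : MemU Ω u) (hne : ∃ z ∈ Ω, u z ≠ 0)
    (hfst : Prod.fst '' Ω = Icc a b) (hsnd : Prod.snd '' Ω = Icc c d) :
    (b - a) * L1N Ω (ux u) < 2 * (d - c) * L1N Ω (uy u) := by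
  obtain ⟨z, hz, hpos, hmax⟩ := hu.exists_mem_interior_isMaxOn hΩ hne
  have hzab : z.1 ∈ interior (Icc a b) :=
    hfst ▸ isOpenMap_fst.image_interior_subset Ω (mem_image_of_mem _ hz)
  have hzcd : z.2 ∈ interior (Icc c d) :=
    hsnd ▸ isOpenMap_snd.image_interior_subset Ω (mem_image_of_mem _ hz)
  rw [interior_Icc] at hzab hzcd
  have hab : a < b := hzab.1.trans hzab.2
  have hcd : c < d := hzcd.1.trans hzcd.2
  calc (b - a) * L1N Ω (ux u)
      < (b - a) * (2 * (d - c) * u z) := mul_lt_mul_of_pos_left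
        (hu.L1N_ux_lt hΩ hsnd hcd hpos (isMaxOn_iff.1 hmax)) (sub_pos.2 hab)
    _ = 2 * (d - c) * ((b - a) * u z) := by ring
    _ ≤ 2 * (d - c) * L1N Ω (uy u) := mul_le_mul_of_nonneg_left
        (hu.mul_le_L1N_uy hΩ hfst (interior_subset hz)) (by linarith)

end MemU

section Disc

/-- The closed unit disc, in the form in which it appears in the main theorem; `ℝ × ℝ` carries
the sup norm, so this is not `Metric.closedBall 0 1`. -/
abbrev unitDisc : Set (ℝ × ℝ) := {z : ℝ × ℝ | z.1 ^ 2 + z.2 ^ 2 ≤ 1}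

theorem isCompact_unitDisc : IsCompact unitDisc := by
  refine (isCompact_Icc (a := ((-1, -1) : ℝ × ℝ)) (b := (1, 1))).of_isClosed_subset
    (isClosed_le (by fun_prop) continuous_const) fun z hz => ?_
  have hz : z.1 ^ 2 + z.2 ^ 2 ≤ 1 := hz
  have hfst : |z.1| ≤ 1 := (sq_le_one_iff_abs_le_one _).1 (by linarith [sq_nonneg z.2])
  have hsnd : |z.2| ≤ 1 := (sq_le_one_iff_abs_le_one _).1 (by linarith [sq_nonneg z.1])
  exact ⟨⟨(abs_le.1 hfst).1, (abs_le.1 hsnd).1⟩, ⟨(abs_le.1 hfst).2, (abs_le.1 hsnd).2⟩⟩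

theorem preimage_swap_unitDisc : Prod.swap ⁻¹' unitDisc = unitDisc := by
  ext z
  simp [add_comm]

theorem fst_image_unitDisc : Prod.fst '' unitDisc = Icc (-1) 1 := by
  ext x
  rw [mem_Icc, ← abs_le, ← sq_le_one_iff_abs_le_one]
  refine ⟨?_, fun hx => ⟨(x, 0), by simpa using hx, rfl⟩⟩
  rintro ⟨z, hz, rfl⟩
  exact (le_add_of_nonneg_right (sq_nonneg z.2)).trans hz

theorem snd_image_unitDisc : Prod.snd '' unitDisc = Icc (-1) 1 := by
  rw [← fst_image_preimage_swap, preimage_swap_unitDisc, fst_image_unitDisc]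

theorem convexOn_sq_add_sq : ConvexOn ℝ univ fun z : ℝ × ℝ => z.1 ^ 2 + z.2 ^ 2 :=
  ((even_two.convexOn_pow (𝕜 := ℝ)).comp_linearMap (LinearMap.fst ℝ ℝ ℝ)).add
    ((even_two.convexOn_pow (𝕜 := ℝ)).comp_linearMap (LinearMap.snd ℝ ℝ ℝ))

theorem convex_unitDisc : Convex ℝ unitDisc := by
  simpa using convexOn_sq_add_sq.convex_le 1

theorem sq_add_sq_eq_one_of_mem_frontier_unitDisc {z : ℝ × ℝ} (hz : z ∈ frontier unitDisc) :
    z.1 ^ 2 + z.2 ^ 2 = 1 :=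
  frontier_le_subset_eq (f := fun z : ℝ × ℝ => z.1 ^ 2 + z.2 ^ 2) (by fun_prop) continuous_const hz

theorem MemU.L1N_ux_div_L1N_uy_lt_two {u : ℝ × ℝ → ℝ} (hu : MemU unitDisc u)
    (hne : ∃ z ∈ unitDisc, u z ≠ 0) : L1N unitDisc (ux u) / L1N unitDisc (uy u) < 2 := by
  have h := hu.mul_L1N_ux_lt isCompact_unitDisc hne fst_image_unitDisc snd_image_unitDisc
  rw [div_lt_iff₀ (hu.L1N_uy_pos isCompact_unitDisc hne)]
  linarith

end Disc

section CappedTent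

variable {k a : ℝ}

/-- The extremal family: the tent `1 - |x|`, cut off near the unit circle by a steep paraboloid so
that it vanishes there. The slices parallel to the `x`-axis have supremum `1` except near the ends,
while those parallel to the `y`-axis have supremum at most `1 - |x|`. -/
noncomputable def cappedTent (k : ℝ) (z : ℝ × ℝ) : ℝ :=
  min (1 - |z.1|) (k * (1 - (z.1 ^ 2 + z.2 ^ 2)))

theorem locallyLipschitz_cappedTent (k : ℝ) : LocallyLipschitz (cappedTent k) :=
  ((LipschitzWith.const (1 : ℝ)).sub
    (lipschitzWith_one_norm.comp LipschitzWith.prod_fst)).locallyLipschitz.min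
    (ContDiff.locallyLipschitz (𝕂 := ℝ) (by fun_prop))

theorem concaveOn_cappedTent (hk : 0 ≤ k) : ConcaveOn ℝ univ (cappedTent k) :=
  ((concaveOn_const 1 convex_univ).sub
    ((convexOn_norm convex_univ).comp_linearMap (LinearMap.fst ℝ ℝ ℝ))).inf
    (((concaveOn_const 1 convex_univ).sub convexOn_sq_add_sq).smul hk)

theorem memU_cappedTent (hk : 0 ≤ k) : MemU unitDisc (cappedTent k) := by
  obtain ⟨C, hC⟩ := (locallyLipschitz_cappedTent k).locallyLipschitzOn
    |>.exists_lipschitzOnWith_of_compact isCompact_unitDisc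
  refine ⟨(locallyLipschitz_cappedTent k).continuous.continuousOn,
    (concaveOn_cappedTent hk).subset (subset_univ _) convex_unitDisc, fun z hz => ?_, C,
    fun z hz g hg => hg.le_of_lipschitzOn (mem_interior_iff_mem_nhds.1 hz) hC⟩
  have h := sq_add_sq_eq_one_of_mem_frontier_unitDisc hz
  have habs : |z.1| ≤ 1 := (sq_le_one_iff_abs_le_one _).1 (by linarith [sq_nonneg z.2])
  simp [cappedTent, h, habs]

theorem sliceSup_cappedTent_le {x : ℝ} (hx : x ∈ Icc (-1) 1) :
    sliceSup unitDisc (cappedTent k) x ≤ 1 - |x| :=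
  Real.sSup_le (by rintro _ ⟨y, -, rfl⟩; exact min_le_left _ _) (sub_nonneg.2 (abs_le.2 hx))

theorem L1N_uy_cappedTent_le (hk : 0 ≤ k) : L1N unitDisc (uy (cappedTent k)) ≤ 2 := by
  have hu := memU_cappedTent hk
  have hle : ∫ x in (-1)..1, sliceSup unitDisc (cappedTent k) x ≤ ∫ x in (-1)..1, (1 - |x|) :=
    intervalIntegral.integral_mono_on (by norm_num)
      (hu.integrable_sliceSup isCompact_unitDisc).intervalIntegrable
      (Continuous.intervalIntegrable (by fun_prop) _ _) fun x hx => sliceSup_cappedTent_le hx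
  have htent : ∫ x in (-1 : ℝ)..1, (1 - |x|) = 1 := by
    rw [intervalIntegral.integral_sub (by simp) (continuous_abs.intervalIntegrable _ _),
      integral_abs_neg_self zero_le_one]
    norm_num
  rw [hu.L1N_uy_eq_intervalIntegral isCompact_unitDisc (by norm_num) fst_image_unitDisc]
  linarith

theorem one_le_cappedTent {y : ℝ} (hk : 0 ≤ k) (hka : 1 ≤ k * (1 - a ^ 2))
    (hy : y ∈ Icc (-a) a) : 1 ≤ cappedTent k (0, y) := by
  have hya : y ^ 2 ≤ a ^ 2 := sq_le_sq' hy.1 hy.2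
  refine le_min (by simp) (hka.trans (mul_le_mul_of_nonneg_left ?_ hk))
  simpa only [zero_pow two_ne_zero, zero_add] using sub_le_sub_left hya 1

theorem le_L1N_ux_cappedTent (hk : 0 ≤ k) (ha : 0 ≤ a) (ha1 : a ≤ 1)
    (hka : 1 ≤ k * (1 - a ^ 2)) : 4 * a ≤ L1N unitDisc (ux (cappedTent k)) := by
  have hu := preimage_swap_unitDisc ▸ (memU_cappedTent hk).comp_swap
  set v := cappedTent k ∘ Prod.swap
  have hint := hu.integrable_sliceSup isCompact_unitDisc
  have hone : ∀ y ∈ Icc (-a) a, 1 ≤ sliceSup unitDisc v y := fun y hy => by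
    have hmem : (y, 0) ∈ unitDisc := by
      simpa using abs_le.2 ⟨(neg_le_neg ha1).trans hy.1, hy.2.trans ha1⟩
    exact (one_le_cappedTent hk hka hy).trans (le_sliceSup isCompact_unitDisc hu.continuousOn hmem)
  rw [← L1N_uy_comp_swap, preimage_swap_unitDisc, hu.L1N_uy_eq isCompact_unitDisc]
  calc 4 * a = 2 * (1 * volume.real (Icc (-a) a)) := by
        rw [Real.volume_real_Icc_of_le (by linarith)]
        ring
    _ ≤ 2 * ∫ y in Icc (-a) a, sliceSup unitDisc v y := by
        gcongr
        exact setIntegral_ge_of_const_le_real measurableSet_Icc (by simp) hone hint.integrableOn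
    _ ≤ 2 * ∫ y, sliceSup unitDisc v y :=
        mul_le_mul_of_nonneg_left (setIntegral_le_integral hint (Filter.Eventually.of_forall
          (sliceSup_nonneg fun z hz => hu.nonneg_s11 isCompact_unitDisc hz))) zero_le_two

theorem exists_memU_lt_L1N_ux_div_L1N_uy {w : ℝ} (hw : w < 2) :
    ∃ u, MemU unitDisc u ∧ (∃ z ∈ unitDisc, u z ≠ 0) ∧
      w < L1N unitDisc (ux u) / L1N unitDisc (uy u) := by
  obtain ⟨a, ha, ha1⟩ := exists_between (max_lt (by linarith : w / 2 < 1) one_pos)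
  obtain ⟨hwa, ha0⟩ := max_lt_iff.1 ha
  have hs : 0 < 1 - a ^ 2 := by nlinarith
  have hk : 0 < (1 - a ^ 2)⁻¹ := inv_pos.2 hs
  have hka : 1 ≤ (1 - a ^ 2)⁻¹ * (1 - a ^ 2) := (inv_mul_cancel₀ hs.ne').ge
  have hu := memU_cappedTent hk.le
  have hne : ∃ z ∈ unitDisc, cappedTent (1 - a ^ 2)⁻¹ z ≠ 0 :=
    ⟨0, by simp, by simp [cappedTent, (lt_min one_pos hk).ne']⟩
  have huy_pos := hu.L1N_uy_pos isCompact_unitDisc hne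
  refine ⟨_, hu, hne, (lt_div_iff₀ huy_pos).2 ?_⟩
  calc w * L1N unitDisc (uy (cappedTent (1 - a ^ 2)⁻¹))
      < 2 * a * L1N unitDisc (uy (cappedTent (1 - a ^ 2)⁻¹)) :=
        mul_lt_mul_of_pos_right (by linarith) huy_pos
    _ ≤ 2 * a * 2 := mul_le_mul_of_nonneg_left (L1N_uy_cappedTent_le hk.le) (by linarith)
    _ = 4 * a := by ring
    _ ≤ L1N unitDisc (ux (cappedTent (1 - a ^ 2)⁻¹)) := le_L1N_ux_cappedTent hk.le ha0.le ha1.le hka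

end CappedTent

/-- Example 1: for the closed unit disc, the supremum of
`‖u_x‖₁ / ‖u_y‖₁` over nonzero `u ∈ 𝒰_Ω` equals `2`, and it is not attained. -/
theorem stmt_11 :
    sSup {r : ℝ | ∃ u : ℝ × ℝ → ℝ,
        MemU {z : ℝ × ℝ | z.1 ^ 2 + z.2 ^ 2 ≤ 1} u ∧
        (∃ z ∈ {z : ℝ × ℝ | z.1 ^ 2 + z.2 ^ 2 ≤ 1}, u z ≠ 0) ∧
        r = L1N {z : ℝ × ℝ | z.1 ^ 2 + z.2 ^ 2 ≤ 1} (ux u) /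
          L1N {z : ℝ × ℝ | z.1 ^ 2 + z.2 ^ 2 ≤ 1} (uy u)} = 2 ∧
    ∀ u : ℝ × ℝ → ℝ, MemU {z : ℝ × ℝ | z.1 ^ 2 + z.2 ^ 2 ≤ 1} u →
      (∃ z ∈ {z : ℝ × ℝ | z.1 ^ 2 + z.2 ^ 2 ≤ 1}, u z ≠ 0) →
      L1N {z : ℝ × ℝ | z.1 ^ 2 + z.2 ^ 2 ≤ 1} (ux u) /
        L1N {z : ℝ × ℝ | z.1 ^ 2 + z.2 ^ 2 ≤ 1} (uy u) ≠ 2 := by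
  refine ⟨csSup_eq_of_forall_le_of_forall_lt_exists_gt ?_ ?_ fun w hw => ?_,
    fun u hu hne => (hu.L1N_ux_div_L1N_uy_lt_two hne).ne⟩
  · obtain ⟨u, hu, hne, -⟩ := exists_memU_lt_L1N_ux_div_L1N_uy two_pos
    exact ⟨_, u, hu, hne, rfl⟩
  · rintro r ⟨u, hu, hne, rfl⟩
    exact (hu.L1N_ux_div_L1N_uy_lt_two hne).le
  · obtain ⟨u, hu, hne, h⟩ := exists_memU_lt_L1N_ux_div_L1N_uy hw
    exact ⟨_, ⟨u, hu, hne, rfl⟩, h⟩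
end
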